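/- arXiv:2106.09342 — 8 statements merged into one kernel-verified Lean document; each statement's English description precedes it below -/
import Mathlib

section
/- Let K be a field and let d, r ≥ 0 be integers. Write 𝔻^d_r = Spec A^d_r. For every separated K-scheme S of finite type, the contravariant functor from the category of separated finite-type K-schemes to sets sending T to Hom_K(T ×_{Spec K} 𝔻^d_r, S), and sending a K-morphism T → T' to the map Hom_K(T' ×_K 𝔻^d_r, S) → Hom_K(T ×_K 𝔻^d_r, S) given by precomposition with the induced morphism T ×_K 𝔻^d_r → T' ×_K 𝔻^d_r, is representable by a separated K-scheme of finite type (the jet scheme J^d_r S). -/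
open AlgebraicGeometry CategoryTheory Limits MvPolynomial

noncomputable section

/-- `A^d_r = K[t₁,…,t_d]/(t₁,…,t_d)^{r+1}`, the coordinate ring of the formal `d`-dimensional
disk of order `r`, so that `𝔻^d_r = Spec A^d_r`. -/
abbrev jetAlgebra (K : Type) [Field K] (d r : ℕ) : Type :=
  MvPolynomial (Fin d) K ⧸
    (Ideal.span (Set.range (X : Fin d → MvPolynomial (Fin d) K))) ^ (r + 1)

/-- The structure morphism `𝔻^d_r = Spec A^d_r ⟶ Spec K`. -/
def diskMap (K : Type) [Field K] (d r : ℕ) :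
    Spec (CommRingCat.of (jetAlgebra K d r)) ⟶ Spec (CommRingCat.of K) :=
  Spec.map (CommRingCat.ofHom (algebraMap K (jetAlgebra K d r)))

namespace JetAux
open Opposite

variable {k D : Scheme.{0}} (p : D ⟶ k)

/-- The map on base changes to D induced by a morphism over k. -/
def bc {T' T : Scheme.{0}} {t' : T' ⟶ k} {t : T ⟶ k} (u : T' ⟶ T) (hu : u ≫ t = t') :
    pullback t' p ⟶ pullback t p :=
  pullback.lift (pullback.fst _ _ ≫ u) (pullback.snd _ _)
    (by rw [Category.assoc, hu, pullback.condition])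

lemma bc_fst {T' T : Scheme.{0}} {t' : T' ⟶ k} {t : T ⟶ k} (u : T' ⟶ T) (hu : u ≫ t = t') :
    bc p u hu ≫ pullback.fst t p = pullback.fst t' p ≫ u := pullback.lift_fst _ _ _

lemma bc_snd {T' T : Scheme.{0}} {t' : T' ⟶ k} {t : T ⟶ k} (u : T' ⟶ T) (hu : u ≫ t = t') :
    bc p u hu ≫ pullback.snd t p = pullback.snd t' p := pullback.lift_snd _ _ _

lemma bc_id {T : Scheme.{0}} (t : T ⟶ k) : bc p (𝟙 T) (Category.id_comp t) = 𝟙 _ := by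
  apply pullback.hom_ext <;> simp [bc_fst, bc_snd]

lemma bc_comp {T'' T' T : Scheme.{0}} {t'' : T'' ⟶ k} {t' : T' ⟶ k} {t : T ⟶ k}
    (v : T'' ⟶ T') (hv : v ≫ t' = t'') (u : T' ⟶ T) (hu : u ≫ t = t') :
    bc p v hv ≫ bc p u hu = bc p (v ≫ u) (by rw [Category.assoc, hu, hv]) := by
  apply pullback.hom_ext
  · rw [Category.assoc, bc_fst, bc_fst, ← Category.assoc, bc_fst, Category.assoc]
  · rw [Category.assoc, bc_snd, bc_snd, bc_snd]

lemma isPullback_bc {T' T : Scheme.{0}} {t' : T' ⟶ k} {t : T ⟶ k} (u : T' ⟶ T)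
    (hu : u ≫ t = t') :
    IsPullback (bc p u hu) (pullback.fst t' p) (pullback.fst t p) u := by
  have h1 : IsPullback (bc p u hu ≫ pullback.snd t p) (pullback.fst t' p) p (u ≫ t) := by
    rw [bc_snd]; subst hu; exact (IsPullback.of_hasPullback _ _).flip
  exact IsPullback.of_right h1 (bc_fst p u hu) (IsPullback.of_hasPullback t p).flip

lemma bc_comp_assoc {T'' T' T : Scheme.{0}} {t'' : T'' ⟶ k} {t' : T' ⟶ k} {t : T ⟶ k}
    (v : T'' ⟶ T') (hv : v ≫ t' = t'') (u : T' ⟶ T) (hu : u ≫ t = t') (w : T'' ⟶ T)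
    (hw : w ≫ t = t'') (e : v ≫ u = w) {Z : Scheme.{0}} (h : pullback t p ⟶ Z) :
    bc p v hv ≫ bc p u hu ≫ h = bc p w hw ≫ h := by
  subst e
  rw [← Category.assoc, bc_comp]

/-- Jets: pairs of a structure morphism `t : T ⟶ k` and a `k`-morphism `T ×_k D ⟶ S`. -/
structure Jet {S : Scheme.{0}} (s : S ⟶ k) (T : Scheme.{0}) : Type where
  t : T ⟶ k
  h : pullback t p ⟶ S
  w : h ≫ s = pullback.fst t p ≫ t

variable {p}

lemma Jet.ext' {S : Scheme.{0}} {s : S ⟶ k} {T : Scheme.{0}} (x y : Jet p s T)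
    (e : x.t = y.t) (H : bc p (𝟙 T) ((Category.id_comp _).trans e.symm) ≫ y.h = x.h) : x = y := by
  cases x with | mk t h w => 
  cases y with | mk t' h' w' =>
  dsimp only at e
  subst e
  have H' : bc p (𝟙 T) (Category.id_comp t) ≫ h' = h := H
  rw [bc_id, Category.id_comp] at H'
  subst H'
  rfl

lemma Jet.bc_h {S : Scheme.{0}} {s : S ⟶ k} {T : Scheme.{0}} {x y : Jet p s T}
    (h : x = y) {T' : Scheme.{0}} {t' : T' ⟶ k} (u : T' ⟶ T) (hu : u ≫ x.t = t')
    (hu' : u ≫ y.t = t') :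
    bc p u hu ≫ x.h = bc p u hu' ≫ y.h := by
  subst h; rfl

/-- Pullback of jets. -/
abbrev Jet.pull {S : Scheme.{0}} {s : S ⟶ k} {T T' : Scheme.{0}} (u : T' ⟶ T) (x : Jet p s T) :
    Jet p s T' where
  t := u ≫ x.t
  h := bc p u rfl ≫ x.h
  w := by rw [Category.assoc, x.w, ← Category.assoc, bc_fst, Category.assoc]

/-- Pushforward of jets. -/
abbrev Jet.push {S S' : Scheme.{0}} {s : S ⟶ k} {s' : S' ⟶ k} (g : S ⟶ S') (hg : g ≫ s' = s)
    {T : Scheme.{0}} (x : Jet p s T) : Jet p s' T where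
  t := x.t
  h := x.h ≫ g
  w := by rw [Category.assoc, hg, x.w]

lemma Jet.pull_id {S : Scheme.{0}} {s : S ⟶ k} {T : Scheme.{0}} (x : Jet p s T) :
    x.pull (𝟙 T) = x :=
  Jet.ext' _ _ (Category.id_comp _) rfl

lemma Jet.pull_comp {S : Scheme.{0}} {s : S ⟶ k} {T T' T'' : Scheme.{0}} (v : T'' ⟶ T')
    (u : T' ⟶ T) (x : Jet p s T) :
    x.pull (v ≫ u) = (x.pull u).pull v := by
  refine Jet.ext' _ _ (Category.assoc _ _ _) ?_
  refine (bc_comp_assoc p _ _ _ _ v (by simp) (by simp) _).trans ?_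
  exact bc_comp_assoc p _ _ _ _ _ _ rfl _

lemma Jet.h_eq_of_pull_eq {S : Scheme.{0}} {s : S ⟶ k} {T T' T'' : Scheme.{0}} (u : T'' ⟶ T)
    (v : T'' ⟶ T') (x : Jet p s T) (y : Jet p s T') (H : x.pull u = y.pull v)
    {t : T'' ⟶ k} (hu : u ≫ x.t = t) (hv : v ≫ y.t = t) :
    bc p u hu ≫ x.h = bc p v hv ≫ y.h := by
  have := Jet.bc_h H (𝟙 _) (t' := t) ((Category.id_comp _).trans hu)
    ((Category.id_comp _).trans hv)
  refine (bc_comp_assoc p _ _ _ _ _ _ (Category.id_comp u) _).symm.trans (this.trans ?_)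
  exact bc_comp_assoc p _ _ _ _ _ _ (Category.id_comp v) _

lemma Jet.push_pull {S S' : Scheme.{0}} {s : S ⟶ k} {s' : S' ⟶ k} (g : S ⟶ S')
    (hg : g ≫ s' = s) {T T' : Scheme.{0}} (u : T' ⟶ T) (x : Jet p s T) :
    (x.pull u).push g hg = (x.push g hg).pull u :=
  Jet.ext' _ _ rfl (by
    refine (bc_comp_assoc p _ _ _ _ u rfl (Category.id_comp u) _).trans ?_
    exact (Category.assoc _ _ _).symm)

variable (p) in
/-- The presheaf of jets. -/
def jetF {S : Scheme.{0}} (s : S ⟶ k) : Scheme.{0}ᵒᵖ ⥤ Type where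
  obj T := Jet p s T.unop
  map u := TypeCat.ofHom (fun x => x.pull u.unop)
  map_id T := by
    ext x; exact Jet.pull_id x
  map_comp f g := by
    ext x; exact Jet.pull_comp g.unop f.unop x

lemma jetF_map {S : Scheme.{0}} (s : S ⟶ k) {T T' : Scheme.{0}} (u : T' ⟶ T) (x : Jet p s T) :
    (jetF p s).map u.op x = x.pull u := rfl

/-- Functoriality of the presheaf of jets. -/
def jetMap {S S' : Scheme.{0}} {s : S ⟶ k} {s' : S' ⟶ k} (g : S ⟶ S') (hg : g ≫ s' = s) :
    jetF p s ⟶ jetF p s' where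
  app T := TypeCat.ofHom (fun x => Jet.push g hg x)
  naturality T T' u := by
    ext x
    exact Jet.push_pull g hg u.unop x

lemma jetMap_app {S S' : Scheme.{0}} {s : S ⟶ k} {s' : S' ⟶ k} (g : S ⟶ S') (hg : g ≫ s' = s)
    {T : Scheme.{0}} (x : Jet p s T) : (jetMap g hg).app (op T) x = Jet.push g hg x := rfl

section sheaf

lemma hom_ext_of_cover {T X Y : Scheme.{0}} (𝒰 : T.OpenCover) (q : X ⟶ T)
    (P : 𝒰.I₀ → Scheme.{0}) (a : ∀ i, P i ⟶ X) (b : ∀ i, P i ⟶ 𝒰.X i)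
    (h : ∀ i, IsPullback (a i) (b i) q (𝒰.f i)) (f g : X ⟶ Y)
    (H : ∀ i, a i ≫ f = a i ≫ g) : f = g := by
  refine Scheme.Cover.hom_ext (𝒰.pullback₁ q) _ _ fun i => ?_
  refine (cancel_epi (h i).isoPullback.hom).1 ?_
  have e : (h i).isoPullback.hom ≫ (𝒰.pullback₁ q).f i = a i := (h i).isoPullback_hom_fst
  refine (Category.assoc _ _ _).symm.trans (Eq.trans ?_ (Category.assoc _ _ _))
  erw [e]
  exact H i

lemma exists_glue_of_cover {T X Y : Scheme.{0}} (𝒰 : T.OpenCover) (q : X ⟶ T)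
    (P : 𝒰.I₀ → Scheme.{0}) (a : ∀ i, P i ⟶ X) (b : ∀ i, P i ⟶ 𝒰.X i)
    (h : ∀ i, IsPullback (a i) (b i) q (𝒰.f i)) (g : ∀ i, P i ⟶ Y)
    (H : ∀ i j (W : Scheme.{0}) (α : W ⟶ P i) (β : W ⟶ P j), α ≫ a i = β ≫ a j →
      α ≫ g i = β ≫ g j) : ∃ f : X ⟶ Y, ∀ i, a i ≫ f = g i := by
  have e (i) : (h i).isoPullback.inv ≫ a i = (𝒰.pullback₁ q).f i := (h i).isoPullback_inv_fst
  refine ⟨Scheme.Cover.glueMorphisms (𝒰.pullback₁ q)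
    (fun i => (h i).isoPullback.inv ≫ g i) ?_, ?_⟩
  · intro i j
    refine (Category.assoc _ _ _).symm.trans (Eq.trans ?_ (Category.assoc _ _ _))
    apply H
    refine (Category.assoc _ _ _).trans (Eq.trans ?_ (Category.assoc _ _ _).symm)
    erw [e, e]
    exact pullback.condition
  · intro i
    rw [← cancel_epi (h i).isoPullback.inv]
    refine (Category.assoc _ _ _).symm.trans ?_
    erw [e]
    exact Scheme.Cover.ι_glueMorphisms (𝒰.pullback₁ q) _ _ i

lemma Jet.eq_of_cover {S : Scheme.{0}} {s : S ⟶ k} {T : Scheme.{0}} (𝒰 : T.OpenCover)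
    (x y : Jet p s T) (H : ∀ i, x.pull (𝒰.f i) = y.pull (𝒰.f i)) : x = y := by
  have e : x.t = y.t := Scheme.Cover.hom_ext 𝒰 _ _ fun i => congrArg Jet.t (H i)
  refine Jet.ext' _ _ e ?_
  refine hom_ext_of_cover 𝒰 (pullback.fst x.t p) _ _ _
    (fun i => isPullback_bc p (𝒰.f i) (t := x.t) rfl) _ _ fun i => ?_
  refine (bc_comp_assoc p _ _ _ _ (𝒰.f i) (by rw [e]) (Category.comp_id _) _).trans ?_
  exact (Jet.h_eq_of_pull_eq _ _ _ _ (H i) rfl _).symm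

lemma Jet.exists_glue {S : Scheme.{0}} {s : S ⟶ k} {T : Scheme.{0}} (𝒰 : T.OpenCover)
    (x : ∀ i, Jet p s (𝒰.X i))
    (H : ∀ i j, (x i).pull (pullback.fst (𝒰.f i) (𝒰.f j)) =
      (x j).pull (pullback.snd (𝒰.f i) (𝒰.f j))) :
    ∃ y : Jet p s T, ∀ i, y.pull (𝒰.f i) = x i := by
  let t : T ⟶ k := Scheme.Cover.glueMorphisms 𝒰 (fun i => (x i).t)
    fun i j => congrArg Jet.t (H i j)
  have ht (i) : 𝒰.f i ≫ t = (x i).t := Scheme.Cover.ι_glueMorphisms 𝒰 _ _ i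
  have hp (i) := isPullback_bc p (𝒰.f i) (ht i)
  obtain ⟨h, hh⟩ := exists_glue_of_cover 𝒰 (pullback.fst t p) _ _ _ hp (fun i => (x i).h) <| by
    intro i j W a b hab
    have hab1 : (a ≫ pullback.fst _ _) ≫ 𝒰.f i = (b ≫ pullback.fst _ _) ≫ 𝒰.f j := by
      rw [Category.assoc, Category.assoc, ← bc_fst p _ (ht i), ← bc_fst p _ (ht j),
        ← Category.assoc, hab, Category.assoc]
    have hab2 : a ≫ pullback.snd _ _ = b ≫ pullback.snd _ _ := by
      rw [← bc_snd p _ (ht i), ← bc_snd p _ (ht j), ← Category.assoc, hab, Category.assoc]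
    let q := pullback.fst (𝒰.f i) (𝒰.f j) ≫ (x i).t
    let c : W ⟶ pullback q p := pullback.lift (pullback.lift _ _ hab1) (a ≫ pullback.snd _ _) (by
      simp only [q, pullback.lift_fst_assoc, Category.assoc]
      rw [pullback.condition])
    have ht' : pullback.snd (𝒰.f i) (𝒰.f j) ≫ (x j).t = q := by
      simp only [q, ← ht]; rw [pullback.condition_assoc]
    have hca : c ≫ bc p (pullback.fst (𝒰.f i) (𝒰.f j)) rfl = a := by
      apply pullback.hom_ext
      · rw [Category.assoc, bc_fst, pullback.lift_fst_assoc, pullback.lift_fst]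
      · rw [Category.assoc, bc_snd, pullback.lift_snd]
    have hcb : c ≫ bc p (pullback.snd (𝒰.f i) (𝒰.f j)) ht' = b := by
      apply pullback.hom_ext
      · rw [Category.assoc, bc_fst, pullback.lift_fst_assoc, pullback.lift_snd]
      · rw [Category.assoc, bc_snd, pullback.lift_snd, hab2]
    have h3 := Jet.h_eq_of_pull_eq _ _ _ _ (H i j) (t := q) rfl ht'
    rw [← hca, ← hcb, Category.assoc, Category.assoc, h3]
  refine ⟨⟨t, h, ?_⟩, fun i => ?_⟩
  · refine hom_ext_of_cover 𝒰 (pullback.fst t p) _ _ _ hp _ _ fun i => ?_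
    rw [← Category.assoc, hh, (x i).w]
    rw [← Category.assoc, bc_fst, Category.assoc, ht]
  · refine Jet.ext' _ _ (ht i) ?_
    rw [← hh i]
    exact bc_comp_assoc p _ _ _ _ _ _ (Category.id_comp _) _

lemma isSheaf_jetF {S : Scheme.{0}} (s : S ⟶ k) :
    Presheaf.IsSheaf Scheme.zariskiTopology.{0} (jetF p s) := by
  rw [isSheaf_iff_isSheaf_of_type,
    Precoverage.isSheaf_toGrothendieck_iff_of_isStableUnderBaseChange]
  rintro Y R hR
  obtain ⟨(𝓤 : Y.OpenCover), rfl⟩ := Scheme.exists_cover_of_mem_pretopology hR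
  refine (Presieve.isSheafFor_arrows_iff_pullbacks (jetF p s) 𝓤.f).mpr ?_
  intro x hx
  obtain ⟨y, hy⟩ := Jet.exists_glue 𝓤 x hx
  exact ⟨y, hy, fun z hz => Jet.eq_of_cover 𝓤 _ _ fun i => (hz i).trans (hy i).symm⟩

/-- The sheaf of jets. -/
def jetSheaf {S : Scheme.{0}} (s : S ⟶ k) : Sheaf Scheme.zariskiTopology.{0} Type :=
  ⟨jetF p s, isSheaf_jetF s⟩

/-- Morphisms of Zariski sheaves that are bijective on affines are isomorphisms. -/
lemma isIso_of_affine (F G : Sheaf Scheme.zariskiTopology.{0} Type) (f : F ⟶ G)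
    (H : ∀ R : CommRingCat.{0}, Function.Bijective (f.hom.app (op (Spec R)))) : IsIso f := by
  rw [← Sheaf.isLocallyBijective_iff_isIso f]
  constructor
  · constructor
    rintro ⟨U⟩ a b hab
    refine GrothendieckTopology.superset_covering _ ?_
      (U.affineCover.mem_grothendieckTopology)
    rw [Sieve.generate_le_iff]
    rintro V _ ⟨i⟩
    apply (H _).1
    have h1 := ConcreteCategory.congr_hom (f.hom.naturality (U.affineCover.f i).op) a
    have h2 := ConcreteCategory.congr_hom (f.hom.naturality (U.affineCover.f i).op) b
    refine h1.trans (Eq.trans ?_ h2.symm)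
    exact congrArg (G.obj.map (U.affineCover.f i).op) hab
  · constructor
    intro U a
    refine GrothendieckTopology.superset_covering _ ?_
      (U.affineCover.mem_grothendieckTopology)
    rw [Sieve.generate_le_iff]
    rintro V _ ⟨i⟩
    exact (H _).2 _

end sheaf
end JetAux

namespace JetAux
open Opposite

variable {k D : Scheme.{0}} {p : D ⟶ k}

section zsec
variable {z : k ⟶ D} (hz : z ≫ p = 𝟙 k)

/-- The section of `T ×_k D ⟶ T` induced by a section `z` of `D ⟶ k`. -/
def zsec {T : Scheme.{0}} (t : T ⟶ k) : T ⟶ pullback t p :=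
  pullback.lift (𝟙 T) (t ≫ z) (by rw [Category.assoc, hz, Category.id_comp, Category.comp_id])

lemma zsec_fst {T : Scheme.{0}} (t : T ⟶ k) : zsec hz t ≫ pullback.fst t p = 𝟙 T :=
  pullback.lift_fst _ _ _

lemma zsec_snd {T : Scheme.{0}} (t : T ⟶ k) : zsec hz t ≫ pullback.snd t p = t ≫ z :=
  pullback.lift_snd _ _ _

lemma zsec_bc {T T' : Scheme.{0}} {t : T ⟶ k} {t' : T' ⟶ k} (u : T' ⟶ T) (hu : u ≫ t = t') :
    zsec hz t' ≫ bc p u hu = u ≫ zsec hz t := by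
  apply pullback.hom_ext
  · rw [Category.assoc, bc_fst, Category.assoc, zsec_fst, ← Category.assoc, zsec_fst,
      Category.id_comp, Category.comp_id]
  · rw [Category.assoc, bc_snd, Category.assoc, zsec_snd, zsec_snd, ← hu, Category.assoc]

lemma isPullback_zsec {T : Scheme.{0}} (t : T ⟶ k) :
    IsPullback (zsec hz t) t (pullback.snd t p) z := by
  have h1 : IsPullback (zsec hz t ≫ pullback.fst t p) t t (z ≫ p) := by
    rw [zsec_fst, hz]; exact IsPullback.of_horiz_isIso ⟨by simp⟩
  exact IsPullback.of_right h1 (zsec_snd hz t) (IsPullback.of_hasPullback t p).flip.flip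

lemma surjective_zsec [Surjective z] {T : Scheme.{0}} (t : T ⟶ k) : Surjective (zsec hz t) :=
  MorphismProperty.of_isPullback (P := @Surjective) (isPullback_zsec hz t).flip inferInstance

/-- Evaluation of jets at the base point. -/
def ev {S : Scheme.{0}} (s : S ⟶ k) : jetF p s ⟶ yoneda.obj S where
  app T := TypeCat.ofHom (fun (x : Jet p s T.unop) => zsec hz x.t ≫ x.h)
  naturality T T' u := by
    ext x
    refine (Category.assoc _ _ _).symm.trans (Eq.trans ?_ (Category.assoc _ _ _))
    exact congrArg (· ≫ Jet.h x) (zsec_bc hz u.unop rfl)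

lemma ev_app {S : Scheme.{0}} (s : S ⟶ k) {T : Scheme.{0}} (x : Jet p s T) :
    (ev hz s).app (op T) x = zsec hz x.t ≫ x.h := rfl

lemma jet_lift [Surjective z] {S U : Scheme.{0}} {s : S ⟶ k} {s' : U ⟶ k} (g : U ⟶ S)
    (hg : g ≫ s = s') [IsOpenImmersion g] {T : Scheme.{0}} (x : Jet p s T) (y : T ⟶ U)
    (hy : y ≫ g = zsec hz x.t ≫ x.h) :
    ∃ x' : Jet p s' T, Jet.push g hg x' = x ∧ zsec hz x'.t ≫ x'.h = y := by
  have hr : Set.range x.h ⊆ Set.range g := by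
    rintro _ ⟨a, rfl⟩
    obtain ⟨b, rfl⟩ := (surjective_zsec hz x.t).surj a
    refine ⟨y b, ?_⟩
    rw [← Scheme.Hom.comp_apply, hy, Scheme.Hom.comp_apply]
  let l := IsOpenImmersion.lift g x.h hr
  have hl : l ≫ g = x.h := IsOpenImmersion.lift_fac _ _ _
  refine ⟨⟨x.t, l, by rw [← hg, ← Category.assoc, hl, x.w]⟩, ?_, ?_⟩
  · refine Jet.ext' _ _ rfl ?_
    refine (congrArg (· ≫ x.h) (bc_id p x.t)).trans ?_
    exact (Category.id_comp _).trans hl.symm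
  · rw [← cancel_mono g, hy]
    exact (Category.assoc _ _ _).trans (congrArg (zsec hz x.t ≫ ·) hl)

lemma isPullback_ev [Surjective z] {S U : Scheme.{0}} {s : S ⟶ k} {s' : U ⟶ k} (g : U ⟶ S)
    (hg : g ≫ s = s') [IsOpenImmersion g] :
    IsPullback (jetMap (p := p) g hg) (ev hz s') (ev hz s) (yoneda.map g) := by
  apply IsPullback.of_forall_isPullback_app
  rintro ⟨T⟩
  rw [Types.isPullback_iff]
  refine ⟨?_, ?_, ?_⟩
  · ext x
    exact (Category.assoc _ _ _).symm
  · intro (x : Jet p s' T) (y : Jet p s' T) ⟨(h : Jet.push g hg x = Jet.push g hg y), h2⟩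
    have ht : x.t = y.t := congrArg (fun a : Jet p s T => a.t) h
    refine Jet.ext' _ _ ht ?_
    rw [← cancel_mono g]
    have := Jet.bc_h h (𝟙 T) (t' := x.t) (Category.id_comp _)
      ((Category.id_comp _).trans ht.symm)
    refine (Category.assoc _ _ _).trans (this.symm.trans ?_)
    refine (congrArg (· ≫ (x.h ≫ g)) (bc_id p x.t)).trans ?_
    exact Category.id_comp _
  · intro (x : Jet p s T) (y : T ⟶ U) h
    obtain ⟨x', h1, h2⟩ := jet_lift hz g hg x y h.symm
    exact ⟨x', h1, h2⟩

end zsec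
end JetAux

namespace JetAux
open Opposite

variable {k D : Scheme.{0}} {p : D ⟶ k}

section rep
variable {z : k ⟶ D} (hz : z ≫ p = 𝟙 k)

lemma exists_rep {z : k ⟶ D} (hz : z ≫ p = 𝟙 k) [Surjective z] {S : Scheme.{0}} (s : S ⟶ k) (𝒰 : Scheme.OpenCover.{0} S)
    (J : 𝒰.I₀ → Scheme.{0}) (φ : ∀ i, yoneda.obj (J i) ≅ jetF p (𝒰.f i ≫ s)) :
    ∃ X : Scheme.{0}, Nonempty (yoneda.obj X ≅ jetF p s) := by
  let f : ∀ i, yoneda.obj (J i) ⟶ (jetSheaf (p := p) s).1 :=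
    fun i => (φ i).hom ≫ jetMap (p := p) (𝒰.f i) rfl
  have hf : ∀ i, MorphismProperty.presheaf @IsOpenImmersion (f i) := by
    intro i
    have h1 : MorphismProperty.presheaf @IsOpenImmersion (yoneda.map (𝒰.f i)) :=
      MorphismProperty.relative_map (P := @IsOpenImmersion) (inferInstance : IsOpenImmersion (𝒰.f i))
    have := MorphismProperty.relative_isStableUnderBaseChange (F := yoneda) @IsOpenImmersion
    have := MorphismProperty.relative_respectsIso (F := yoneda) @IsOpenImmersion
    have h2 : MorphismProperty.presheaf @IsOpenImmersion (jetMap (p := p) (𝒰.f i) rfl) :=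
      MorphismProperty.of_isPullback (P := MorphismProperty.presheaf @IsOpenImmersion)
        (isPullback_ev hz (s := s) (𝒰.f i) rfl).flip h1
    exact (MorphismProperty.cancel_left_of_respectsIso (MorphismProperty.presheaf @IsOpenImmersion)
      (φ i).hom (jetMap (p := p) (𝒰.f i) rfl)).2 h2
  have : Presheaf.IsLocallySurjective Scheme.zariskiTopology (Limits.Sigma.desc f) := by
    constructor
    have hU : ∀ j : 𝒰.I₀, IsOpenImmersion (𝒰.f j) := fun j => inferInstance
    intro T (x : Jet p s T)
    refine GrothendieckTopology.superset_covering _ ?_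
      (Scheme.Cover.mem_grothendieckTopology (𝒰.pullback₁ (zsec hz x.t ≫ x.h)))
    rw [Sieve.generate_le_iff]
    rintro V _ ⟨i⟩
    have hi : IsOpenImmersion (𝒰.f i) := hU i
    have hy : pullback.snd (zsec hz x.t ≫ x.h) (𝒰.f i) ≫ 𝒰.f i =
        zsec hz (x.pull (pullback.fst (zsec hz x.t ≫ x.h) (𝒰.f i))).t ≫
        (x.pull (pullback.fst (zsec hz x.t ≫ x.h) (𝒰.f i))).h := by
      refine pullback.condition.symm.trans ?_
      refine (Category.assoc _ _ _).symm.trans (Eq.trans ?_ (Category.assoc _ _ _))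
      exact congrArg (· ≫ x.h) (zsec_bc hz (pullback.fst (zsec hz x.t ≫ x.h) (𝒰.f i)) rfl).symm
    obtain ⟨x', h1, h2⟩ := jet_lift hz (𝒰.f i) rfl _ _ hy
    refine ⟨(Limits.Sigma.ι (fun i => yoneda.obj (J i)) i).app _ ((φ i).inv.app
      (op (pullback (zsec hz x.t ≫ x.h) (𝒰.f i))) x'), ?_⟩
    have e1 := NatTrans.congr_app (Limits.Sigma.ι_desc f i) (op (pullback (zsec hz x.t ≫ x.h) (𝒰.f i)))
    have e2 := ConcreteCategory.congr_hom e1 ((φ i).inv.app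
      (op (pullback (zsec hz x.t ≫ x.h) (𝒰.f i))) x')
    refine e2.trans (Eq.trans ?_ h1)
    have e3 := ConcreteCategory.congr_hom ((φ i).inv_hom_id_app
      (op (pullback (zsec hz x.t ≫ x.h) (𝒰.f i)))) x'
    exact congrArg (Jet.push (𝒰.f i) rfl) e3
  exact ⟨_, ⟨Functor.representableByEquiv (Scheme.LocalRepresentability.representableBy
    (F := jetSheaf (p := p) s) hf)⟩⟩

/-- The projection from a representing object to `S`. -/
def proj {S : Scheme.{0}} {s : S ⟶ k} {X : Scheme.{0}} (φ : yoneda.obj X ⟶ jetF p s) : X ⟶ S :=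
  yoneda.preimage (φ ≫ ev hz s)

lemma map_proj {S : Scheme.{0}} {s : S ⟶ k} {X : Scheme.{0}} (φ : yoneda.obj X ⟶ jetF p s) :
    yoneda.map (proj hz φ) = φ ≫ ev hz s := yoneda.map_preimage _

lemma isPullback_proj [Surjective z] {S U : Scheme.{0}} {s : S ⟶ k} {s' : U ⟶ k} (g : U ⟶ S)
    (hg : g ≫ s = s') [IsOpenImmersion g] {X Y : Scheme.{0}} (φ : yoneda.obj X ≅ jetF p s)
    (ψ : yoneda.obj Y ≅ jetF p s') :
    ∃ q : Y ⟶ X, IsPullback q (proj hz ψ.hom) (proj hz φ.hom) g := by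
  have h1 : IsPullback (yoneda.map (yoneda.preimage (ψ.hom ≫ jetMap g hg ≫ φ.inv)))
      (yoneda.map (proj hz ψ.hom)) (yoneda.map (proj hz φ.hom)) (yoneda.map g) := by
    refine IsPullback.of_iso (isPullback_ev hz (p := p) g hg) ψ.symm φ.symm (Iso.refl _)
      (Iso.refl _) ?_ ?_ ?_ ?_
    · simp
    · rw [map_proj]; simp
    · rw [map_proj]; simp
    · simp
  refine ⟨_, IsPullback.of_map yoneda ?_ h1⟩
  apply yoneda.map_injective
  rw [Functor.map_comp, Functor.map_comp]
  exact h1.w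

lemma local_proj (P : MorphismProperty Scheme.{0}) [IsZariskiLocalAtTarget P]
    [Surjective z] {S : Scheme.{0}} {s : S ⟶ k} (𝒰 : Scheme.OpenCover.{0} S)
    (J : 𝒰.I₀ → Scheme.{0}) (ψ : ∀ i, yoneda.obj (J i) ≅ jetF p (𝒰.f i ≫ s))
    {X : Scheme.{0}} (φ : yoneda.obj X ≅ jetF p s) (H : ∀ i, P (proj hz (ψ i).hom)) :
    P (proj hz φ.hom) := by
  refine IsZariskiLocalAtTarget.of_openCover 𝒰 fun i => ?_
  obtain ⟨q, hq⟩ := isPullback_proj hz (𝒰.f i) rfl φ (ψ i)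
  have e : hq.isoPullback.inv ≫ proj hz (ψ i).hom = Scheme.Cover.pullbackHom 𝒰 _ i :=
    hq.isoPullback_inv_snd
  rw [← e]
  have : IsIso hq.isoPullback.symm.hom := inferInstance
  exact MorphismProperty.RespectsIso.precomp P hq.isoPullback.symm.hom _ (H i)

/-- The universal jet. -/
def univ {S : Scheme.{0}} {s : S ⟶ k} {X : Scheme.{0}} (φ : yoneda.obj X ⟶ jetF p s) : Jet p s X :=
  φ.app (op X) (𝟙 X)

lemma app_eq_pull {S : Scheme.{0}} {s : S ⟶ k} {X : Scheme.{0}} (φ : yoneda.obj X ⟶ jetF p s)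
    {T : Scheme.{0}} (g : T ⟶ X) : φ.app (op T) g = (univ φ).pull g := by
  have := ConcreteCategory.congr_hom (φ.naturality g.op) (𝟙 X)
  refine Eq.trans ?_ this
  exact congrArg (φ.app (op T)) (Category.comp_id g).symm

lemma proj_eq {S : Scheme.{0}} {s : S ⟶ k} {X : Scheme.{0}} (φ : yoneda.obj X ⟶ jetF p s) :
    proj hz φ = zsec hz (univ φ).t ≫ (univ φ).h := by
  have := NatTrans.congr_app (map_proj hz φ) (op X)
  have := ConcreteCategory.congr_hom this (𝟙 X)
  exact (Category.id_comp _).symm.trans this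

lemma proj_comp {S : Scheme.{0}} {s : S ⟶ k} {X : Scheme.{0}} (φ : yoneda.obj X ⟶ jetF p s) :
    proj hz φ ≫ s = (univ φ).t := by
  rw [proj_eq, Category.assoc, (univ φ).w, ← Category.assoc, zsec_fst, Category.id_comp]

lemma app_bijective {S : Scheme.{0}} {s : S ⟶ k} {X : Scheme.{0}} (φ : yoneda.obj X ≅ jetF p s)
    (T : Scheme.{0}) : Function.Bijective (fun g : T ⟶ X => (univ φ.hom).pull g) := by
  have := (isIso_iff_bijective (φ.hom.app (op T))).1 inferInstance
  have e : (fun g : T ⟶ X => (univ φ.hom).pull g) = (fun g => φ.hom.app (op T) g) := by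
    funext g
    exact (app_eq_pull φ.hom g).symm
  rw [e]
  exact this

/-- The bijection on points over `k`. -/
lemma pull_bij {S : Scheme.{0}} {s : S ⟶ k} {X : Scheme.{0}} (φ : yoneda.obj X ≅ jetF p s)
    (T : Scheme.{0}) (t : T ⟶ k) (h : pullback t p ⟶ S) (w : h ≫ s = pullback.fst t p ≫ t) :
    ∃! g : T ⟶ X, ∃ hg : g ≫ (univ φ.hom).t = t, bc p g hg ≫ (univ φ.hom).h = h := by
  obtain ⟨g, hg⟩ := (app_bijective φ T).2 ⟨t, h, w⟩
  have key : ∀ g : T ⟶ X, (∃ hg : g ≫ (univ φ.hom).t = t, bc p g hg ≫ (univ φ.hom).h = h) ↔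
      (univ φ.hom).pull g = ⟨t, h, w⟩ := by
    intro g
    constructor
    · rintro ⟨hg, H⟩
      subst hg
      subst H
      rfl
    · intro H
      have e : g ≫ (univ φ.hom).t = t := congrArg (fun a : Jet p s T => a.t) H
      refine ⟨e, ?_⟩
      subst e
      have := Jet.bc_h H (𝟙 T) (Category.id_comp _) (Category.id_comp _)
      rw [bc_id, Category.id_comp, Category.id_comp] at this
      exact this
  refine ⟨g, (key g).2 hg, fun g' hg' => ?_⟩
  exact (app_bijective φ T).1 (((key g').1 hg').trans hg.symm)

end rep
end JetAux

namespace JetAux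

open TensorProduct in
lemma coord_map {K : Type} [Field K] {B : Type} [CommRing B] [Algebra K B] {ι : Type}
    (b : Module.Basis ι K B) {A A' : Type} [CommRing A] [Algebra K A] [CommRing A'] [Algebra K A']
    (ψ : A →ₐ[K] A') (x : A ⊗[K] B) (j : ι) :
    (Algebra.TensorProduct.basis A' b).repr (Algebra.TensorProduct.map ψ (AlgHom.id K B) x) j =
      ψ ((Algebra.TensorProduct.basis A b).repr x j) := by
  induction x using TensorProduct.induction_on with
  | zero => simp
  | tmul a y => simp [Algebra.TensorProduct.basis_repr_tmul]
  | add x y hx hy => simp only [map_add, Finsupp.add_apply, hx, hy]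

open TensorProduct in
set_option maxHeartbeats 1000000 in
/-- Weil restriction of algebras. -/
theorem weil (K : Type) [Field K] (R : Type) [CommRing R] [Algebra K R] [Algebra.FiniteType K R]
    (B : Type) [CommRing B] [Algebra K B] [Module.Finite K B] :
    ∃ (W : Type) (_ : CommRing W) (_ : Algebra K W) (_ : Algebra.FiniteType K W)
      (u : R →ₐ[K] W ⊗[K] B), ∀ (C : Type) [CommRing C] [Algebra K C] (φ : R →ₐ[K] C ⊗[K] B),
      ∃! ψ : W →ₐ[K] C, (Algebra.TensorProduct.map ψ (AlgHom.id K B)).comp u = φ := by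
  obtain ⟨n, π, hπ⟩ := Algebra.FiniteType.iff_quotient_mvPolynomial''.1
    (inferInstance : Algebra.FiniteType K R)
  let b := Module.finBasis K B
  let P := MvPolynomial (Fin n × Fin (Module.finrank K B)) K
  let Φ : MvPolynomial (Fin n) K →ₐ[K] P ⊗[K] B :=
    aeval fun s => ∑ j, (X (s, j) : P) ⊗ₜ[K] b j
  let I : Ideal P := Ideal.span
    {c | ∃ f, π f = 0 ∧ ∃ j, c = (Algebra.TensorProduct.basis P b).repr (Φ f) j}
  let q : P →ₐ[K] P ⧸ I := Ideal.Quotient.mkₐ K I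
  let Φ' : MvPolynomial (Fin n) K →ₐ[K] (P ⧸ I) ⊗[K] B :=
    (Algebra.TensorProduct.map q (AlgHom.id K B)).comp Φ
  have hΦ' : ∀ f, f ∈ RingHom.ker π → Φ' f = 0 := by
    intro f hf
    apply (Algebra.TensorProduct.basis (P ⧸ I) b).repr.injective
    ext j
    rw [map_zero, Finsupp.zero_apply]
    refine (coord_map b q (Φ f) j).trans ?_
    exact Ideal.Quotient.eq_zero_iff_mem.2 (Ideal.subset_span ⟨f, hf, j, rfl⟩)
  let u : R →ₐ[K] (P ⧸ I) ⊗[K] B := (Ideal.Quotient.liftₐ (RingHom.ker π) Φ' hΦ').comp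
    (Ideal.quotientKerAlgEquivOfSurjective hπ).symm.toAlgHom
  have hu : ∀ f, u (π f) = Φ' f := by
    intro f
    have : (Ideal.quotientKerAlgEquivOfSurjective hπ).symm (π f) =
        Ideal.Quotient.mk (RingHom.ker π) f := by
      rw [AlgEquiv.symm_apply_eq]; rfl
    change Ideal.Quotient.liftₐ (RingHom.ker π) Φ' hΦ'
      ((Ideal.quotientKerAlgEquivOfSurjective hπ).symm (π f)) = _
    rw [this]
    rfl
  have hΦX : ∀ s j, (Algebra.TensorProduct.basis P b).repr (Φ (X s)) j = X (s, j) := by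
    intro s j
    simp only [Φ, aeval_X, map_sum, Finsupp.finsetSum_apply,
      Algebra.TensorProduct.basis_repr_tmul]
    simp [Finsupp.single_apply]
  refine ⟨P ⧸ I, inferInstance, inferInstance, inferInstance, u, ?_⟩
  intro C _ _ φ
  let ψ0 : P →ₐ[K] C := aeval fun sj =>
    (Algebra.TensorProduct.basis C b).repr (φ (π (X sj.1))) sj.2
  have h0 : (Algebra.TensorProduct.map ψ0 (AlgHom.id K B)).comp Φ = φ.comp π := by
    apply MvPolynomial.algHom_ext
    intro s
    apply (Algebra.TensorProduct.basis C b).repr.injective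
    ext j
    rw [AlgHom.comp_apply, coord_map, hΦX, AlgHom.comp_apply]
    exact aeval_X _ _
  have hI : ∀ a ∈ I, ψ0 a = 0 := by
    intro a ha
    have : I ≤ RingHom.ker ψ0 := by
      refine Ideal.span_le.2 ?_
      rintro _ ⟨f, hf, j, rfl⟩
      refine (coord_map b ψ0 (Φ f) j).symm.trans ?_
      have := DFunLike.congr_fun h0 f
      rw [AlgHom.comp_apply, AlgHom.comp_apply, hf, map_zero] at this
      rw [this, map_zero, Finsupp.zero_apply]
    exact this ha
  have hq : (Ideal.Quotient.liftₐ I ψ0 hI).comp q = ψ0 := by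
    ext; rfl
  have hcomp : ∀ (ψ : P ⧸ I →ₐ[K] C) f, Algebra.TensorProduct.map ψ (AlgHom.id K B) (Φ' f) =
      Algebra.TensorProduct.map (ψ.comp q) (AlgHom.id K B) (Φ f) := by
    intro ψ f
    have : (Algebra.TensorProduct.map ψ (AlgHom.id K B)).comp
        (Algebra.TensorProduct.map q (AlgHom.id K B)) =
        Algebra.TensorProduct.map (ψ.comp q) (AlgHom.id K B) := by
      ext <;> simp
    exact DFunLike.congr_fun this (Φ f)
  refine ⟨Ideal.Quotient.liftₐ I ψ0 hI, ?_, ?_⟩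
  · apply AlgHom.ext
    intro r
    obtain ⟨f, rfl⟩ := hπ r
    rw [AlgHom.comp_apply, hu, hcomp, hq]
    exact DFunLike.congr_fun h0 f
  · intro ψ hψ
    have : ψ.comp q = ψ0 := by
      apply MvPolynomial.algHom_ext
      rintro ⟨s, j⟩
      have h1 := DFunLike.congr_fun hψ (π (X s))
      rw [AlgHom.comp_apply, hu, hcomp] at h1
      have h2 := coord_map b (ψ.comp q) (Φ (X s)) j
      rw [hΦX, h1] at h2
      have h3 : ψ0 (X (s, j)) = (Algebra.TensorProduct.basis C b).repr (φ (π (X s))) j :=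
        aeval_X _ _
      exact h2.symm.trans h3.symm
    apply AlgHom.ext
    intro x
    obtain ⟨x, rfl⟩ := Ideal.Quotient.mk_surjective x
    exact DFunLike.congr_fun this x

end JetAux

namespace JetAux
open Opposite

section
variable {k D : Scheme.{0}} {p : D ⟶ k}

lemma Jet.pull_eq {S : Scheme.{0}} {s : S ⟶ k} {X T : Scheme.{0}} (x : Jet p s X)
    (y : Jet p s T) (g : T ⟶ X) (hg : g ≫ x.t = y.t) (H : bc p g hg ≫ x.h = y.h) :
    x.pull g = y := by
  obtain ⟨t, h, w⟩ := y
  dsimp only at hg H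
  subst hg
  have H' : bc p g rfl ≫ x.h = h := H
  subst H'
  rfl

/-- The morphism of presheaves defined by a jet. -/
def homOfJet {S : Scheme.{0}} {s : S ⟶ k} {X : Scheme.{0}} (x : Jet p s X) :
    yoneda.obj X ⟶ jetF p s where
  app T := TypeCat.ofHom (fun g => Jet.pull g x)
  naturality T T' u := by
    ext g
    exact Jet.pull_comp u.unop g x

lemma univ_homOfJet {S : Scheme.{0}} {s : S ⟶ k} {X : Scheme.{0}} (x : Jet p s X) :
    univ (homOfJet x) = x := Jet.pull_id x

lemma exists_iso_of_bij {S : Scheme.{0}} {s : S ⟶ k} {X : Scheme.{0}} (x : Jet p s X)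
    (H : ∀ C : CommRingCat.{0}, Function.Bijective (fun g : Spec C ⟶ X => x.pull g)) :
    ∃ φ : yoneda.obj X ≅ jetF p s, univ φ.hom = x := by
  let f : Scheme.zariskiTopology.{0}.yoneda.obj X ⟶ jetSheaf (p := p) s := ⟨homOfJet x⟩
  have : IsIso f := isIso_of_affine _ _ f H
  exact ⟨(sheafToPresheaf _ _).mapIso (asIso f), univ_homOfJet x⟩

end

section affine
open TensorProduct
variable {K : Type} [Field K] {R : Type} [CommRing R] [Algebra K R]
  {B : Type} [CommRing B] [Algebra K B]

variable (K) in
/-- The structure morphism of the spectrum of a `K`-algebra. -/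
abbrev str (A : Type) [CommRing A] [Algebra K A] :
    Spec (CommRingCat.of A) ⟶ Spec (CommRingCat.of K) :=
  Spec.map (CommRingCat.ofHom (algebraMap K A))

/-- The jet attached to an algebra morphism. -/
def jetOf {C : Type} [CommRing C] [Algebra K C] (φ : R →ₐ[K] C ⊗[K] B) :
    Jet (str K B) (str K R) (Spec (CommRingCat.of C)) where
  t := str K C
  h := (pullbackSpecIso K C B).hom ≫ Spec.map (CommRingCat.ofHom φ.toRingHom)
  w := by
    refine Eq.trans ?_ (pullbackSpecIso_hom_base K C B)
    refine (Category.assoc _ _ _).trans (congrArg ((pullbackSpecIso K C B).hom ≫ ·) ?_)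
    refine (Spec.map_comp _ _).symm.trans (congrArg Spec.map ?_)
    ext x
    exact φ.commutes x

lemma jetOf_t {C : Type} [CommRing C] [Algebra K C] (φ : R →ₐ[K] C ⊗[K] B) :
    (jetOf φ).t = str K C := rfl

lemma jetOf_injective {C : Type} [CommRing C] [Algebra K C] (φ φ' : R →ₐ[K] C ⊗[K] B)
    (h : jetOf φ = jetOf φ') : φ = φ' := by
  have h1 : bc (str K B) (𝟙 (Spec (CommRingCat.of C))) (Category.id_comp (str K C)) ≫
      (jetOf φ).h = bc (str K B) (𝟙 (Spec (CommRingCat.of C))) (Category.id_comp (str K C)) ≫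
      (jetOf φ').h := Jet.bc_h h (𝟙 _) (Category.id_comp _) (Category.id_comp _)
  rw [bc_id] at h1
  have h2 := (Category.id_comp _).symm.trans (h1.trans (Category.id_comp _))
  have h3 := Spec.map_injective ((cancel_epi (pullbackSpecIso K C B).hom).1 h2)
  apply AlgHom.ext
  intro x
  exact ConcreteCategory.congr_hom h3 x

lemma jetOf_surjective {C : Type} [CommRing C] [Algebra K C]
    (x : Jet (str K B) (str K R) (Spec (CommRingCat.of C))) (hx : x.t = str K C) :
    ∃ φ : R →ₐ[K] C ⊗[K] B, jetOf φ = x := by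
  obtain ⟨t, h, w⟩ := x
  dsimp only at hx
  subst hx
  obtain ⟨f, hf⟩ := Spec.map_surjective ((pullbackSpecIso K C B).inv ≫ h)
  have hh : h = (pullbackSpecIso K C B).hom ≫ Spec.map f := by
    rw [hf, Iso.hom_inv_id_assoc]
  have hc : CommRingCat.ofHom (algebraMap K R) ≫ f =
      CommRingCat.ofHom (algebraMap K (C ⊗[K] B)) := by
    apply Spec.map_injective
    rw [← cancel_epi (pullbackSpecIso K C B).hom, Spec.map_comp, ← Category.assoc, ← hh, w,
      pullbackSpecIso_hom_base]
  refine ⟨⟨f.hom, fun x => ConcreteCategory.congr_hom hc x⟩, ?_⟩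
  subst hh
  rfl

lemma jetOf_pull {C W : Type} [CommRing C] [Algebra K C] [CommRing W] [Algebra K W]
    (ψ : W →ₐ[K] C) (u : R →ₐ[K] W ⊗[K] B) :
    (jetOf u).pull (Spec.map (CommRingCat.ofHom ψ.toRingHom)) =
      jetOf ((Algebra.TensorProduct.map ψ (AlgHom.id K B)).comp u) := by
  have ht : Spec.map (CommRingCat.ofHom ψ.toRingHom) ≫ str K W = str K C := by
    refine (Spec.map_comp _ _).symm.trans (congrArg Spec.map ?_)
    ext x
    exact ψ.commutes x
  have hb : bc (str K B) (Spec.map (CommRingCat.ofHom ψ.toRingHom)) ht ≫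
      (pullbackSpecIso K W B).hom = (pullbackSpecIso K C B).hom ≫
      Spec.map (CommRingCat.ofHom (Algebra.TensorProduct.map ψ (AlgHom.id K B)).toRingHom) := by
    rw [← Iso.eq_comp_inv]
    apply pullback.hom_ext
    · rw [bc_fst, Category.assoc, Category.assoc, pullbackSpecIso_inv_fst,
        ← pullbackSpecIso_hom_fst, Category.assoc, ← Spec.map_comp, ← Spec.map_comp]
      congr 2
    · rw [bc_snd, Category.assoc, Category.assoc, pullbackSpecIso_inv_snd,
        ← pullbackSpecIso_hom_snd, ← Spec.map_comp]
      congr 2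
      ext x
      simp
  refine Jet.pull_eq _ _ _ ht ?_
  refine (Category.assoc _ _ _).symm.trans ((congrArg (· ≫ _) hb).trans ?_)
  refine (Category.assoc _ _ _).trans (congrArg ((pullbackSpecIso K C B).hom ≫ ·) ?_)
  exact (Spec.map_comp _ _).symm

lemma affine_rep [Algebra.FiniteType K R] [Module.Finite K B] :
    ∃ (W : Type) (_ : CommRing W) (_ : Algebra K W) (_ : Algebra.FiniteType K W)
      (φ : yoneda.obj (Spec (CommRingCat.of W)) ≅ jetF (str K B) (str K R)),
      (univ φ.hom).t = str K W := by
  obtain ⟨W, _, _, hW, u, hu⟩ := weil K R B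
  obtain ⟨φ, hφ⟩ := exists_iso_of_bij (jetOf u) <| by
    rintro ⟨C, _⟩
    constructor
    · intro g1 g2 h
      obtain ⟨ψ1, rfl⟩ := Spec.map_surjective g1
      obtain ⟨ψ2, rfl⟩ := Spec.map_surjective g2
      have ht : Spec.map ψ1 ≫ str K W = Spec.map ψ2 ≫ str K W :=
        congrArg (fun a : Jet (str K B) (str K R) _ => a.t) h
      rw [← Spec.map_comp, ← Spec.map_comp] at ht
      have ht' := Spec.map_injective ht
      let _ : Algebra K C := (ψ1.hom.comp (algebraMap K W)).toAlgebra
      let a1 : W →ₐ[K] C := ⟨ψ1.hom, fun x => rfl⟩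
      let a2 : W →ₐ[K] C := ⟨ψ2.hom, fun x => (ConcreteCategory.congr_hom ht' x).symm⟩
      have h' : (jetOf u).pull (Spec.map (CommRingCat.ofHom a1.toRingHom)) =
        (jetOf u).pull (Spec.map (CommRingCat.ofHom a2.toRingHom)) := h
      rw [jetOf_pull, jetOf_pull] at h'
      have h2 := jetOf_injective _ _ h'
      have h3 : a1 = a2 := (hu C _).unique h2 rfl
      have h4 : ψ1 = ψ2 := by
        ext x
        exact DFunLike.congr_fun h3 x
      rw [h4]
    · intro x
      obtain ⟨c, hc⟩ := Spec.map_surjective x.t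
      let _ : Algebra K C := c.hom.toAlgebra
      obtain ⟨φ, hφ⟩ := jetOf_surjective (C := C) x hc.symm
      obtain ⟨ψ, hψ, -⟩ := hu C φ
      refine ⟨Spec.map (CommRingCat.ofHom ψ.toRingHom), ?_⟩
      refine (jetOf_pull ψ u).trans ?_
      rw [hψ, hφ]
  exact ⟨W, _, _, hW, φ, by rw [hφ, jetOf_t]⟩

lemma affine_rep' {R : CommRingCat.{0}} (s : Spec R ⟶ Spec (CommRingCat.of K))
    [LocallyOfFiniteType s] (B : Type) [CommRing B] [Algebra K B] [Module.Finite K B] :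
    ∃ (W : CommRingCat.{0}) (φ : yoneda.obj (Spec W) ≅ jetF (str K B) s),
      LocallyOfFiniteType (univ φ.hom).t := by
  obtain ⟨R, _⟩ := R
  obtain ⟨f, rfl⟩ := Spec.map_surjective s
  have hf : f.hom.FiniteType :=
    (HasRingHomProperty.Spec_iff (P := @LocallyOfFiniteType)).1 inferInstance
  let _ : Algebra K R := f.hom.toAlgebra
  have : Algebra.FiniteType K R := hf
  obtain ⟨W, _, _, hW, φ, hφ⟩ := affine_rep (K := K) (R := R) (B := B)
  refine ⟨CommRingCat.of W, φ, ?_⟩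
  have : LocallyOfFiniteType (str K W) := by
    refine (HasRingHomProperty.Spec_iff (P := @LocallyOfFiniteType)).2 ?_
    exact RingHom.finiteType_algebraMap.2 hW
  exact hφ ▸ this

end affine
end JetAux

namespace JetAux
open Opposite

section disk
variable (K : Type) [Field K] (d r : ℕ)

lemma jetAlgebra_pow (i : Fin d) :
    (Ideal.Quotient.mk _ (X i) : jetAlgebra K d r) ^ (r + 1) = 0 := by
  rw [← map_pow]
  exact Ideal.Quotient.eq_zero_iff_mem.2
    (Ideal.pow_mem_pow (Ideal.subset_span (Set.mem_range_self i)) _)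

lemma jetAlgebra_finite : Module.Finite K (jetAlgebra K d r) := by
  have h1 : Algebra.FiniteType K (jetAlgebra K d r) := inferInstance
  have h2 : Algebra.IsIntegral K (jetAlgebra K d r) := by
    constructor
    intro x
    obtain ⟨x, rfl⟩ := Ideal.Quotient.mk_surjective x
    induction x using MvPolynomial.induction_on with
    | C a => exact isIntegral_algebraMap
    | add p q hp hq => rw [map_add]; exact hp.add hq
    | mul_X p i hp =>
      rw [map_mul]
      refine hp.mul (IsIntegral.of_pow (Nat.succ_pos r) ?_)
      rw [jetAlgebra_pow]
      exact isIntegral_zero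
  exact Algebra.IsIntegral.finite

/-- The augmentation. -/
def aug : jetAlgebra K d r →ₐ[K] K :=
  Ideal.Quotient.liftₐ _ (aeval (fun _ => (0 : K))) <| by
    have : Ideal.span (Set.range (X : Fin d → MvPolynomial (Fin d) K)) ^ (r + 1) ≤
        RingHom.ker (aeval (fun _ : Fin d => (0 : K))) := by
      refine (Ideal.pow_le_self (Nat.succ_ne_zero r)).trans (Ideal.span_le.2 ?_)
      rintro _ ⟨i, rfl⟩
      exact aeval_X _ _
    exact fun a ha => this ha

lemma aug_nilpotent (x : jetAlgebra K d r) : IsNilpotent (x - algebraMap K _ (aug K d r x)) := by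
  obtain ⟨x, rfl⟩ := Ideal.Quotient.mk_surjective x
  induction x using MvPolynomial.induction_on with
  | C a =>
    have : aug K d r (Ideal.Quotient.mk _ (C a)) = a := (aug K d r).commutes a
    rw [this]
    refine ⟨1, (pow_one _).trans ?_⟩
    exact sub_eq_zero.2 rfl
  | add p q hp hq =>
    rw [map_add, map_add, map_add, add_sub_add_comm]
    exact Commute.isNilpotent_add (Commute.all _ _) hp hq
  | mul_X p i hp =>
    have : aug K d r (Ideal.Quotient.mk _ (X i)) = 0 := aeval_X _ _
    rw [map_mul, map_mul, this, mul_zero, map_zero, sub_zero]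
    exact Commute.isNilpotent_mul_left (Commute.all _ _) ⟨r + 1, jetAlgebra_pow K d r i⟩

/-- The base point of the disk. -/
def zpt : Spec (CommRingCat.of K) ⟶ Spec (CommRingCat.of (jetAlgebra K d r)) :=
  Spec.map (CommRingCat.ofHom (aug K d r).toRingHom)

lemma zpt_comp : zpt K d r ≫ str K (jetAlgebra K d r) = 𝟙 _ := by
  refine (Spec.map_comp _ _).symm.trans (Eq.trans (congrArg Spec.map ?_) (Spec.map_id _))
  ext x
  exact (aug K d r).commutes x

lemma zpt_surj : Surjective (zpt K d r) := by
  constructor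
  intro (x : PrimeSpectrum (jetAlgebra K d r))
  refine ⟨(⊥ : PrimeSpectrum K), ?_⟩
  apply PrimeSpectrum.ext
  change Ideal.comap (aug K d r).toRingHom ⊥ = x.asIdeal
  have hle : Ideal.comap (aug K d r).toRingHom ⊥ ≤ x.asIdeal := by
    intro a (ha : aug K d r a = 0)
    have := aug_nilpotent K d r a
    rw [ha, map_zero, sub_zero] at this
    obtain ⟨n, hn⟩ := this
    exact x.isPrime.mem_of_pow_mem n (hn ▸ x.asIdeal.zero_mem)
  have hm : (Ideal.comap (aug K d r).toRingHom ⊥).IsMaximal :=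
    Ideal.comap_isMaximal_of_surjective _
      (fun a => ⟨algebraMap K _ a, (aug K d r).commutes a⟩)
  exact hm.eq_of_le x.isPrime.ne_top hle

end disk

theorem exists_jet_scheme (K : Type) [Field K] (d r : ℕ)
    (S : Scheme.{0}) (s : S ⟶ Spec (CommRingCat.of K))
    [IsSeparated s] [LocallyOfFiniteType s] [QuasiCompact s] :
    ∃ (J : Scheme.{0}) (φ : yoneda.obj J ≅ jetF (diskMap K d r) s),
      IsSeparated (univ φ.hom).t ∧ LocallyOfFiniteType (univ φ.hom).t ∧
        QuasiCompact (univ φ.hom).t := by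
  have hB := jetAlgebra_finite K d r
  have hz : zpt K d r ≫ diskMap K d r = 𝟙 _ := zpt_comp K d r
  have := zpt_surj K d r
  have hrep : ∀ i : S.affineCover.I₀, ∃ (W : CommRingCat.{0})
      (φ : yoneda.obj (Spec W) ≅ jetF (diskMap K d r) (S.affineCover.f i ≫ s)),
      LocallyOfFiniteType (univ φ.hom).t := by
    intro i
    have : IsOpenImmersion (S.affineCover.f i) := S.affineCover.map_prop i
    have : LocallyOfFiniteType (S.affineCover.f i ≫ s) := locallyOfFiniteType_comp _ _
    exact @affine_rep' K _ _ (S.affineCover.f i ≫ s) this (jetAlgebra K d r) _ _ hB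
  choose W ψ hψ using hrep
  obtain ⟨J, ⟨φ⟩⟩ := exists_rep hz s S.affineCover (fun i => Spec (W i)) ψ
  have hA : IsZariskiLocalAtTarget (@IsAffineHom : MorphismProperty Scheme.{0}) :=
    @HasAffineProperty.instIsZariskiLocalAtTarget @IsAffineHom _
      instHasAffinePropertyIsAffineHomIsAffine
  have hL : IsZariskiLocalAtTarget (@LocallyOfFiniteType : MorphismProperty Scheme.{0}) :=
    HasRingHomProperty.instIsZariskiLocalAtTarget @LocallyOfFiniteType (Q := RingHom.FiniteType)
  have h1 : IsAffineHom (proj hz φ.hom) := by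
    refine local_proj hz @IsAffineHom S.affineCover (fun i => Spec (W i)) ψ φ fun i => ?_
    have : IsAffine (S.affineCover.X i) := isAffine_Spec _
    infer_instance
  have h2 : LocallyOfFiniteType (proj hz φ.hom) := by
    refine local_proj hz @LocallyOfFiniteType S.affineCover (fun i => Spec (W i)) ψ φ fun i => ?_
    have h := hψ i
    rw [← proj_comp hz] at h
    exact locallyOfFiniteType_of_comp _ (S.affineCover.f i ≫ s)
  refine ⟨J, φ, ?_⟩
  rw [← proj_comp hz]
  exact ⟨inferInstance, inferInstance, inferInstance⟩

end JetAux

/-- For every separated finite-type `K`-scheme `S`, the contravariant functor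
`T ↦ Hom_K(T ×_K 𝔻^d_r, S)` on separated finite-type `K`-schemes (acting on a morphism
`u : T ⟶ T'` by precomposition with the induced morphism `T ×_K 𝔻^d_r ⟶ T' ×_K 𝔻^d_r`) is
representable by a separated finite-type `K`-scheme `J` (the jet scheme `J^d_r S`): there are
bijections `Hom_K(T, J) ≃ Hom_K(T ×_K 𝔻^d_r, S)`, natural in `T`. -/
theorem jet_scheme_representable
    (K : Type) [Field K] (d r : ℕ)
    (S : Scheme) (sS : S ⟶ Spec (CommRingCat.of K))
    [IsSeparated sS] [LocallyOfFiniteType sS] [QuasiCompact sS] :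
    ∃ (J : Scheme) (sJ : J ⟶ Spec (CommRingCat.of K)),
      IsSeparated sJ ∧ LocallyOfFiniteType sJ ∧ QuasiCompact sJ ∧
      ∃ e : ∀ (T : Scheme) (tT : T ⟶ Spec (CommRingCat.of K)),
          IsSeparated tT → LocallyOfFiniteType tT → QuasiCompact tT →
          ({ g : T ⟶ J // g ≫ sJ = tT } ≃
            { h : pullback tT (diskMap K d r) ⟶ S //
                h ≫ sS = pullback.fst tT (diskMap K d r) ≫ tT }),
        ∀ (T T' : Scheme) (tT : T ⟶ Spec (CommRingCat.of K))
          (tT' : T' ⟶ Spec (CommRingCat.of K))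
          (h1 : IsSeparated tT) (h2 : LocallyOfFiniteType tT) (h3 : QuasiCompact tT)
          (h1' : IsSeparated tT') (h2' : LocallyOfFiniteType tT') (h3' : QuasiCompact tT')
          (u : T ⟶ T') (hu : u ≫ tT' = tT) (g : T' ⟶ J) (hg : g ≫ sJ = tT'),
          (↑(e T tT h1 h2 h3 ⟨u ≫ g, by rw [Category.assoc, hg, hu]⟩) :
              pullback tT (diskMap K d r) ⟶ S) =
            pullback.map tT (diskMap K d r) tT' (diskMap K d r) u (𝟙 _)
                (𝟙 (Spec (CommRingCat.of K))) (by rw [hu, Category.comp_id])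
                (by rw [Category.comp_id, Category.id_comp]) ≫
              ↑(e T' tT' h1' h2' h3' ⟨g, hg⟩) := by
  obtain ⟨J, φ, h1, h2, h3⟩ := JetAux.exists_jet_scheme K d r S sS
  refine ⟨J, (JetAux.univ φ.hom).t, h1, h2, h3, ?_⟩
  let f : ∀ (T : Scheme.{0}) (tT : T ⟶ Spec (CommRingCat.of K)),
      { g : T ⟶ J // g ≫ (JetAux.univ φ.hom).t = tT } →
      { h : pullback tT (diskMap K d r) ⟶ S //
                h ≫ sS = pullback.fst tT (diskMap K d r) ≫ tT } := fun T tT g =>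
    ⟨JetAux.bc (diskMap K d r) g.1 g.2 ≫ (JetAux.univ φ.hom).h, by
      rw [Category.assoc, (JetAux.univ φ.hom).w, ← Category.assoc, JetAux.bc_fst, Category.assoc,
        g.2]⟩
  have hf : ∀ T tT, Function.Bijective (f T tT) := by
    intro T tT
    constructor
    · intro g g' h
      obtain ⟨g0, -, h0⟩ := JetAux.pull_bij φ T tT (f T tT g).1 (f T tT g).2
      exact Subtype.ext ((h0 g.1 ⟨g.2, rfl⟩).trans
        (h0 g'.1 ⟨g'.2, (congrArg Subtype.val h).symm⟩).symm)
    · rintro ⟨h, w⟩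
      obtain ⟨g0, ⟨h1, h2⟩, -⟩ := JetAux.pull_bij φ T tT h w
      exact ⟨⟨g0, h1⟩, Subtype.ext h2⟩
  refine ⟨fun T tT _ _ _ => Equiv.ofBijective (f T tT) (hf T tT), ?_⟩
  intro T T' tT tT' _ _ _ _ _ _ u hu g hg
  have e : pullback.map tT (diskMap K d r) tT' (diskMap K d r) u (𝟙 _)
      (𝟙 (Spec (CommRingCat.of K))) (by rw [hu, Category.comp_id])
      (by rw [Category.comp_id, Category.id_comp]) = JetAux.bc (diskMap K d r) u hu := by
    apply pullback.hom_ext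
    · rw [JetAux.bc_fst]; exact pullback.lift_fst _ _ _
    · rw [JetAux.bc_snd]; exact (pullback.lift_snd _ _ _).trans (Category.comp_id _)
  rw [e]
  exact (JetAux.bc_comp_assoc (diskMap K d r) u hu g hg (u ≫ g) _ rfl _).symm

end
end

section
/- Let K be a field and let d, r ≥ 0 be integers. For every finitely generated commutative K-algebra B there exist a finitely generated commutative K-algebra J and a K-algebra homomorphism ε : B → J ⊗_K A^d_r with the following universal property: for every commutative K-algebra C and every K-algebra homomorphism φ : B → C ⊗_K A^d_r there is a unique K-algebra homomorphism ψ : J → C such that (ψ ⊗ id_{A^d_r}) ∘ ε = φ. (Equivalently, the functor C ↦ Hom_{K-alg}(B, C ⊗_K A^d_r) on commutative K-algebras is corepresentable by a finitely generated K-algebra.) -/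
open MvPolynomial TensorProduct

theorem jetAlgebra_finite (K : Type) [Field K] (d r : ℕ) : Module.Finite K (jetAlgebra K d r) := by
  have hint : Algebra.IsIntegral K (jetAlgebra K d r) := by
    constructor
    intro x
    obtain ⟨p, rfl⟩ := Ideal.Quotient.mk_surjective x
    induction p using MvPolynomial.induction_on with
    | C a => exact isIntegral_algebraMap (R := K) (A := jetAlgebra K d r) (x := a)
    | add p q hp hq => rw [map_add]; exact hp.add hq
    | mul_X p i hp =>
      rw [map_mul]
      refine hp.mul (IsIntegral.of_pow (n := r + 1) (Nat.succ_pos r) ?_)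
      rw [← map_pow, Ideal.Quotient.eq_zero_iff_mem.mpr]
      · exact isIntegral_zero
      · exact Ideal.pow_mem_pow (Ideal.subset_span (Set.mem_range_self i)) _
  exact Algebra.IsIntegral.finite

section General

variable {K A : Type} [Field K] [CommRing A] [Algebra K A] {ι : Type}
  (b : Module.Basis ι K A)

theorem repr_map_tensor {P C : Type} [CommRing P] [Algebra K P] [CommRing C] [Algebra K C]
    (ψ : P →ₐ[K] C) (x : P ⊗[K] A) (j : ι) :
    (Algebra.TensorProduct.basis C b).repr
      (Algebra.TensorProduct.map ψ (AlgHom.id K A) x) j =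
      ψ ((Algebra.TensorProduct.basis P b).repr x j) := by
  induction x using TensorProduct.induction_on with
  | zero => simp
  | add x y hx hy => simp only [map_add, Finsupp.add_apply, hx, hy]
  | tmul p a => simp

theorem ext_repr_tensor {C : Type} [CommRing C] [Algebra K C] {x y : C ⊗[K] A}
    (h : ∀ j, (Algebra.TensorProduct.basis C b).repr x j =
      (Algebra.TensorProduct.basis C b).repr y j) : x = y :=
  (Algebra.TensorProduct.basis C b).repr.injective (Finsupp.ext h)

theorem exists_generic [Fintype ι] (n : ℕ) :
    ∃ Φ : MvPolynomial (Fin n) K →ₐ[K] MvPolynomial (Fin n × ι) K ⊗[K] A,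
      ∀ i j, (Algebra.TensorProduct.basis (MvPolynomial (Fin n × ι) K) b).repr (Φ (X i)) j =
        X (i, j) := by
  classical
  refine ⟨aeval fun i => ∑ j, (X (i, j) : MvPolynomial (Fin n × ι) K) ⊗ₜ[K] b j, ?_⟩
  intro i j
  simp [Finsupp.single_apply]

theorem exists_quotient {P : Type} [CommRing P] [Algebra K P] (S : Set P) :
    ∃ (J : Type) (_ : CommRing J) (_ : Algebra K J) (q : P →ₐ[K] J),
      Function.Surjective q ∧ (∀ y ∈ S, q y = 0) ∧
      ∀ (C : Type) [CommRing C] [Algebra K C] (ψ₀ : P →ₐ[K] C), (∀ y ∈ S, ψ₀ y = 0) →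
        ∃ ψ : J →ₐ[K] C, ψ.comp q = ψ₀ := by
  refine ⟨P ⧸ Ideal.span S, inferInstance, inferInstance, Ideal.Quotient.mkₐ K _,
    Ideal.Quotient.mkₐ_surjective K _, ?_, ?_⟩
  · intro y hy
    exact Ideal.Quotient.eq_zero_iff_mem.mpr (Ideal.subset_span hy)
  · intro C _ _ ψ₀ h
    have hI : Ideal.span S ≤ RingHom.ker ψ₀ := Ideal.span_le.mpr h
    exact ⟨Ideal.Quotient.liftₐ _ ψ₀ hI, Ideal.Quotient.liftₐ_comp _ ψ₀ hI⟩

theorem exists_lift {R B D : Type} [CommRing R] [Algebra K R] [CommRing B] [Algebra K B]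
    [CommRing D] [Algebra K D] (f : R →ₐ[K] B) (hf : Function.Surjective f) (g : R →ₐ[K] D)
    (h : ∀ x, f x = 0 → g x = 0) : ∃ ε : B →ₐ[K] D, ∀ x, ε (f x) = g x :=
  have hker : RingHom.ker f.toRingHom ≤ RingHom.ker g.toRingHom := fun x hx => h x hx
  ⟨AlgHom.liftOfSurjective f hf g hker, AlgHom.liftOfSurjective_apply f hf g hker⟩

theorem general_weil [Fintype ι] (b : Module.Basis ι K A)
    (B : Type) [CommRing B] [Algebra K B] [Algebra.FiniteType K B] :
    ∃ (J : Type) (_ : CommRing J) (_ : Algebra K J), Algebra.FiniteType K J ∧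
      ∃ ε : B →ₐ[K] J ⊗[K] A,
        ∀ (C : Type) [CommRing C] [Algebra K C] (φ : B →ₐ[K] C ⊗[K] A),
          ∃! ψ : J →ₐ[K] C,
            (Algebra.TensorProduct.map ψ (AlgHom.id K A)).comp ε = φ := by
  obtain ⟨n, f, hf⟩ := Algebra.FiniteType.iff_quotient_mvPolynomial''.mp
    (inferInstance : Algebra.FiniteType K B)
  obtain ⟨Φ, hΦ⟩ := exists_generic b n
  obtain ⟨J, _, _, q, hq, hq0, hlift⟩ := exists_quotient (K := K)
    {y | ∃ g j, f g = 0 ∧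
      y = (Algebra.TensorProduct.basis (MvPolynomial (Fin n × ι) K) b).repr (Φ g) j}
  obtain ⟨ε, hε⟩ := exists_lift f hf
    ((Algebra.TensorProduct.map q (AlgHom.id K A)).comp Φ) (by
      intro g hg
      apply ext_repr_tensor b
      intro j
      rw [AlgHom.comp_apply, repr_map_tensor, map_zero, Finsupp.zero_apply]
      exact hq0 _ ⟨g, j, hg, rfl⟩)
  refine ⟨J, inferInstance, inferInstance, Algebra.FiniteType.of_surjective q hq, ε, ?_⟩
  intro C _ _ φ
  have key : ∀ (ψ' : J →ₐ[K] C) g,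
      Algebra.TensorProduct.map ψ' (AlgHom.id K A) (ε (f g)) =
        Algebra.TensorProduct.map (ψ'.comp q) (AlgHom.id K A) (Φ g) := by
    intro ψ' g
    apply ext_repr_tensor b
    intro j
    rw [hε, AlgHom.comp_apply, repr_map_tensor, repr_map_tensor, repr_map_tensor,
      AlgHom.comp_apply]
  obtain ⟨ψ₀, hX⟩ : ∃ ψ₀ : MvPolynomial (Fin n × ι) K →ₐ[K] C, ∀ i j,
      ψ₀ (X (i, j)) = (Algebra.TensorProduct.basis C b).repr (φ (f (X i))) j :=
    ⟨aeval fun ij => (Algebra.TensorProduct.basis C b).repr (φ (f (X ij.1))) ij.2,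
      fun i j => aeval_X _ _⟩
  have hψ₀ : (Algebra.TensorProduct.map ψ₀ (AlgHom.id K A)).comp Φ = φ.comp f := by
    apply MvPolynomial.algHom_ext
    intro i
    apply ext_repr_tensor b
    intro j
    rw [AlgHom.comp_apply, repr_map_tensor, hΦ, hX, AlgHom.comp_apply]
  obtain ⟨ψ, hψ⟩ := hlift C ψ₀ (by
    rintro _ ⟨g, j, hg, rfl⟩
    rw [← repr_map_tensor, ← AlgHom.comp_apply, hψ₀, AlgHom.comp_apply, hg, map_zero, map_zero,
      Finsupp.zero_apply])
  refine ⟨ψ, ?_, ?_⟩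
  · apply AlgHom.ext
    intro x
    obtain ⟨g, rfl⟩ := hf x
    rw [AlgHom.comp_apply, key, hψ]
    exact DFunLike.congr_fun hψ₀ g
  · intro ψ' h'
    have h2 : ψ'.comp q = ψ₀ := by
      apply MvPolynomial.algHom_ext
      rintro ⟨i, j⟩
      have h3 := key ψ' (X i)
      rw [← AlgHom.comp_apply, h'] at h3
      rw [hX, h3, repr_map_tensor, hΦ]
    apply AlgHom.ext
    intro x
    obtain ⟨p, rfl⟩ := hq x
    rw [← AlgHom.comp_apply, ← AlgHom.comp_apply, h2, hψ]

end General

/-- For every finitely generated commutative `K`-algebra `B` there exist a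
finitely generated commutative `K`-algebra `J` and a `K`-algebra homomorphism
`ε : B → J ⊗_K A^d_r` such that for every commutative `K`-algebra `C` and every `K`-algebra
homomorphism `φ : B → C ⊗_K A^d_r` there is a unique `K`-algebra homomorphism `ψ : J → C`
with `(ψ ⊗ id) ∘ ε = φ`; i.e. the functor `C ↦ Hom_{K-alg}(B, C ⊗_K A^d_r)` is corepresentable
by a finitely generated `K`-algebra. -/
theorem jet_functor_corepresentable
    (K : Type) [Field K] (d r : ℕ)
    (B : Type) [CommRing B] [Algebra K B] [Algebra.FiniteType K B] :
    ∃ (J : Type) (_ : CommRing J) (_ : Algebra K J), Algebra.FiniteType K J ∧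
      ∃ ε : B →ₐ[K] J ⊗[K] jetAlgebra K d r,
        ∀ (C : Type) [CommRing C] [Algebra K C]
          (φ : B →ₐ[K] C ⊗[K] jetAlgebra K d r),
          ∃! ψ : J →ₐ[K] C,
            (Algebra.TensorProduct.map ψ (AlgHom.id K (jetAlgebra K d r))).comp ε = φ := by
  have := jetAlgebra_finite K d r
  exact general_weil (Module.finBasis K (jetAlgebra K d r)) B
end

section
/- Let K be a field, let d, r ≥ 0 be integers, let A = A^d_r, and let m ⊆ A be the maximal ideal generated by the classes of t₁,…,t_d. Let R be a commutative K-algebra and φ : R → A a K-algebra homomorphism such that for each i with 1 ≤ i ≤ d there exists z_i ∈ R with φ(z_i) − t_i ∈ m². Then φ is surjective. -/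
open MvPolynomial

theorem subalgebra_mem_of_gens {K A : Type} [Field K] [CommRing A] [Algebra K A]
    (S : Subalgebra K A) {d : ℕ} (t : Fin d → A) (m : Ideal A)
    (hm : m = Ideal.span (Set.range t)) (N : ℕ) (hN : m ^ N = ⊥)
    (hA : ∀ a : A, ∃ c : K, a - algebraMap K A c ∈ m)
    (hz : ∀ i, ∃ s ∈ S, s - t i ∈ m ^ 2) (a : A) : a ∈ S := by
  have h1 : ∀ x ∈ m, ∃ s ∈ S, x - s ∈ m ^ 2 := by
    intro x hx
    rw [hm] at hx
    induction hx using Submodule.span_induction with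
    | mem x h =>
      obtain ⟨i, rfl⟩ := h
      obtain ⟨s, hs, h⟩ := hz i
      exact ⟨s, hs, by simpa using (m ^ 2).neg_mem h⟩
    | zero => exact ⟨0, S.zero_mem, by simp⟩
    | add x y _ _ hx hy =>
      obtain ⟨s, hs, h⟩ := hx
      obtain ⟨s', hs', h'⟩ := hy
      refine ⟨s + s', S.add_mem hs hs', ?_⟩
      have := (m ^ 2).add_mem h h'
      rwa [show x + y - (s + s') = x - s + (y - s') by ring]
    | smul a x hxm hx =>
      obtain ⟨s, hs, h⟩ := hx
      obtain ⟨c, hc⟩ := hA a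
      refine ⟨algebraMap K A c * s, S.mul_mem (S.algebraMap_mem c) hs, ?_⟩
      rw [smul_eq_mul, show a * x - algebraMap K A c * s =
        algebraMap K A c * (x - s) + (a - algebraMap K A c) * x by ring]
      refine (m ^ 2).add_mem (Ideal.mul_mem_left _ _ h) ?_
      rw [pow_two]
      exact Ideal.mul_mem_mul hc (by rw [hm]; exact hxm)
  have h2 : ∀ n : ℕ, ∀ x ∈ m ^ n, ∃ s ∈ S, x - s ∈ m ^ (n + 1) := by
    intro n
    induction n with
    | zero =>
      intro x _
      obtain ⟨c, hc⟩ := hA x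
      exact ⟨_, S.algebraMap_mem c, by simpa using hc⟩
    | succ n ih =>
      intro x hx
      rw [pow_succ'] at hx
      induction hx using Submodule.mul_induction_on' with
      | mem_mul_mem x hx y hy =>
        obtain ⟨s, hs, h⟩ := h1 x hx
        obtain ⟨s', hs', h'⟩ := ih y hy
        refine ⟨s * s', S.mul_mem hs hs', ?_⟩
        have hs'm : s' ∈ m ^ n := by
          have := (m ^ n).sub_mem hy (Ideal.pow_le_pow_right (Nat.le_succ n) h')
          simpa using this
        rw [show x * y - s * s' = x * (y - s') + (x - s) * s' by ring]
        refine Ideal.add_mem _ ?_ ?_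
        · rw [pow_succ' m (n + 1)]
          exact Ideal.mul_mem_mul hx h'
        · rw [show n + 1 + 1 = 2 + n by ring, pow_add]
          exact Ideal.mul_mem_mul h hs'm
      | add x _ y _ hx hy =>
        obtain ⟨s, hs, h⟩ := hx
        obtain ⟨s', hs', h'⟩ := hy
        refine ⟨s + s', S.add_mem hs hs', ?_⟩
        rw [show x + y - (s + s') = x - s + (y - s') by ring]
        exact Ideal.add_mem _ h h'
  have h3 : ∀ n : ℕ, ∃ s ∈ S, a - s ∈ m ^ n := by
    intro n
    induction n with
    | zero => exact ⟨0, S.zero_mem, by simp⟩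
    | succ n ih =>
      obtain ⟨s, hs, h⟩ := ih
      obtain ⟨s', hs', h'⟩ := h2 n _ h
      exact ⟨s + s', S.add_mem hs hs', by rwa [← sub_sub]⟩
  obtain ⟨s, hs, h⟩ := h3 N
  rw [hN, Ideal.mem_bot, sub_eq_zero] at h
  rwa [h]

/-- Let `A = A^d_r`, `m ⊆ A` the maximal ideal generated by the classes of
`t₁,…,t_d`, `R` a commutative `K`-algebra, and `φ : R → A` a `K`-algebra homomorphism such that
for every `i` there is `z_i ∈ R` with `φ(z_i) − t_i ∈ m²`. Then `φ` is surjective. -/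
theorem surjective_of_hits_generators_mod_sq
    (K : Type) [Field K] (d r : ℕ)
    (R : Type) [CommRing R] [Algebra K R]
    (φ : R →ₐ[K] jetAlgebra K d r)
    (m : Ideal (jetAlgebra K d r))
    (hm : m = Ideal.span (Set.range fun i : Fin d =>
      Ideal.Quotient.mk
        ((Ideal.span (Set.range (X : Fin d → MvPolynomial (Fin d) K))) ^ (r + 1))
        (X i)))
    (hz : ∀ i : Fin d, ∃ z : R,
      φ z - Ideal.Quotient.mk
        ((Ideal.span (Set.range (X : Fin d → MvPolynomial (Fin d) K))) ^ (r + 1))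
        (X i) ∈ m ^ 2) :
    Function.Surjective φ := by
  intro a
  have key := subalgebra_mem_of_gens φ.range _ m hm (r + 1) ?_ ?_ ?_ a
  · exact key
  · rw [hm, Set.range_comp' (Ideal.Quotient.mk _) X, ← Ideal.map_span, ← Ideal.map_pow,
      Ideal.map_quotient_self]
  · intro a
    obtain ⟨p, rfl⟩ := Ideal.Quotient.mk_surjective a
    induction p using MvPolynomial.induction_on with
    | C c => exact ⟨c, by
        have : Ideal.Quotient.mk ((Ideal.span (Set.range
          (X : Fin d → MvPolynomial (Fin d) K))) ^ (r + 1)) (C c) =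
            algebraMap K (jetAlgebra K d r) c := rfl
        rw [this, sub_self]; exact m.zero_mem⟩
    | add p q hp hq =>
      obtain ⟨c, hc⟩ := hp
      obtain ⟨c', hc'⟩ := hq
      refine ⟨c + c', ?_⟩
      rw [map_add, map_add, add_sub_add_comm]
      exact m.add_mem hc hc'
    | mul_X p i _ =>
      refine ⟨0, ?_⟩
      rw [map_zero, sub_zero, map_mul]
      refine m.mul_mem_left _ ?_
      rw [hm]
      exact Ideal.subset_span ⟨i, rfl⟩
  · intro i
    obtain ⟨z, h⟩ := hz i
    exact ⟨φ z, ⟨z, rfl⟩, h⟩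
end

section
/- Let K be a field, let d ≥ 0 be an integer, and let R be a Noetherian local commutative ring. Suppose that for every integer r ≥ 0 there exists a surjective ring homomorphism R → A^d_r. Then the Krull dimension of R is at least d. -/
open MvPolynomial

/-- Kill the variables with index `< i`. -/
noncomputable def killVars (K : Type) [Field K] (d i : ℕ) :
    MvPolynomial (Fin d) K →ₐ[K] MvPolynomial (Fin d) K :=
  aeval (fun j : Fin d => if (j : ℕ) < i then 0 else X j)

lemma killVars_sub_mem (K : Type) [Field K] (d i : ℕ) (p : MvPolynomial (Fin d) K) :
    p - killVars K d i p ∈ Ideal.span (Set.range (X : Fin d → MvPolynomial (Fin d) K)) := by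
  set m := Ideal.span (Set.range (X : Fin d → MvPolynomial (Fin d) K)) with hm
  have h : (Ideal.Quotient.mkₐ K m) = (Ideal.Quotient.mkₐ K m).comp (killVars K d i) := by
    apply MvPolynomial.algHom_ext
    intro j
    have hX : (X j : MvPolynomial (Fin d) K) ∈ m := Ideal.subset_span ⟨j, rfl⟩
    simp only [AlgHom.comp_apply, killVars, aeval_X]
    split_ifs
    · rw [map_zero]
      exact Ideal.Quotient.eq_zero_iff_mem.mpr hX
    · rfl
  exact Ideal.Quotient.eq.mp (DFunLike.congr_fun h p)

lemma ker_killVars_le (K : Type) [Field K] (d i : ℕ) :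
    RingHom.ker (killVars K d i) ≤
      Ideal.span (Set.range (X : Fin d → MvPolynomial (Fin d) K)) := by
  intro p hp
  have h := killVars_sub_mem K d i p
  rw [RingHom.mem_ker] at hp
  rwa [hp, sub_zero] at h

lemma le_height_ker_killVars (K : Type) [Field K] (d i : ℕ) (hi : i ≤ d) :
    (i : ℕ∞) ≤ (RingHom.ker (killVars K d i)).height := by
  induction i with
  | zero => simp
  | succ i ih =>
    have h1 : RingHom.ker (killVars K d i) < RingHom.ker (killVars K d (i + 1)) := by
      have hcomp : killVars K d (i + 1) = (killVars K d (i + 1)).comp (killVars K d i) := by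
        apply MvPolynomial.algHom_ext
        intro j
        simp only [AlgHom.comp_apply, killVars, aeval_X]
        by_cases hj : (j : ℕ) < i
        · simp [hj, Nat.lt_succ_of_lt hj]
        · simp [hj]
      refine lt_of_le_of_ne ?_ ?_
      · intro p hp
        rw [RingHom.mem_ker] at hp ⊢
        rw [hcomp, AlgHom.comp_apply, hp, map_zero]
      · intro heq
        have hX : (X ⟨i, hi⟩ : MvPolynomial (Fin d) K) ∈ RingHom.ker (killVars K d (i + 1)) := by
          simp [RingHom.mem_ker, killVars]
        rw [← heq] at hX
        simp [RingHom.mem_ker, killVars] at hX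
    haveI := RingHom.ker_isPrime (killVars K d i)
    haveI := RingHom.ker_isPrime (killVars K d (i + 1))
    have h2 := Ideal.height_add_one_le_of_lt_of_isPrime h1
    have h3 := ih (by omega)
    push_cast
    exact (add_le_add_left h3 1).trans h2

lemma le_height_span_X (K : Type) [Field K] (d : ℕ) :
    (d : ℕ∞) ≤ (Ideal.span (Set.range (X : Fin d → MvPolynomial (Fin d) K))).height :=
  (le_height_ker_killVars K d d le_rfl).trans (Ideal.height_mono (ker_killVars_le K d d))

lemma isMaximal_span_X (K : Type) [Field K] (d : ℕ) :
    (Ideal.span (Set.range (X : Fin d → MvPolynomial (Fin d) K))).IsMaximal := by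
  have h : Ideal.span (Set.range (X : Fin d → MvPolynomial (Fin d) K)) =
      RingHom.ker (constantCoeff : MvPolynomial (Fin d) K →+* K) := by
    apply le_antisymm
    · rw [Ideal.span_le]
      rintro _ ⟨j, rfl⟩
      simp [RingHom.mem_ker]
    · intro p hp
      apply ker_killVars_le K d d
      rw [RingHom.mem_ker] at hp ⊢
      have : killVars K d d = aeval (0 : Fin d → MvPolynomial (Fin d) K) := by
        apply MvPolynomial.algHom_ext
        intro j
        simp [killVars]
      rw [this, aeval_zero, hp, map_zero]
  rw [h]
  exact RingHom.ker_isMaximal_of_surjective _ (fun a => ⟨C a, by simp⟩)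

/-- A Nakayama argument. -/
lemma le_of_pow_le_sup {P : Type} [CommRing P] [IsNoetherianRing P] (m p : Ideal P)
    [hm : m.IsPrime] [hp : p.IsPrime] (hpm : p ≤ m) (c : ℕ) (h : m ^ c ≤ p ⊔ m ^ (c + 1)) :
    m ≤ p := by
  set q := Ideal.Quotient.mk p with hq
  have h1 : (m.map q) ^ c ≤ (m.map q) • (m.map q) ^ c := by
    have := Ideal.map_mono (f := q) h
    rw [Ideal.map_sup, Ideal.map_quotient_self, bot_sup_eq, Ideal.map_pow, Ideal.map_pow] at this
    rwa [smul_eq_mul, ← pow_succ']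
  obtain ⟨r, hr, hr0⟩ := Submodule.exists_sub_one_mem_and_smul_eq_zero_of_fg_of_le_smul
    (m.map q) ((m.map q) ^ c) (IsNoetherian.noetherian _) h1
  have hrne : r ≠ 0 := by
    rintro rfl
    rw [zero_sub, neg_mem_iff, ← Ideal.eq_top_iff_one] at hr
    have h2 := Ideal.comap_map_of_surjective q Ideal.Quotient.mk_surjective m
    rw [hr, Ideal.comap_top, ← RingHom.ker_eq_comap_bot, hq, Ideal.mk_ker,
      sup_eq_left.mpr hpm] at h2
    exact hm.ne_top h2.symm
  intro x hx
  have hx1 : q x ^ c ∈ (m.map q) ^ c := Ideal.pow_mem_pow (Ideal.mem_map_of_mem q hx) c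
  have hx2 := hr0 _ hx1
  rw [smul_eq_mul] at hx2
  exact Ideal.Quotient.eq_zero_iff_mem.mp
    (eq_zero_of_pow_eq_zero ((mul_eq_zero.mp hx2).resolve_left hrne))

/-- Let `K` be a field, `d ≥ 0`, and `R` a Noetherian local commutative ring.
If for every `r ≥ 0` there is a surjective ring homomorphism `R → A^d_r`, then the Krull
dimension of `R` is at least `d`. -/
theorem krullDim_ge_of_surjects_onto_jetAlgebras
    (K : Type) [Field K] (d : ℕ)
    (R : Type) [CommRing R] [IsNoetherianRing R] [IsLocalRing R]
    (h : ∀ r : ℕ, ∃ f : R →+* jetAlgebra K d r, Function.Surjective f) :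
    (d : WithBot ℕ∞) ≤ ringKrullDim R := by
  classical
  obtain ⟨s, hs, hcard⟩ :=
    Ideal.exists_finset_card_eq_height_of_isNoetherianRing (IsLocalRing.maximalIdeal R)
  have hrad : IsLocalRing.maximalIdeal R ≤ (Ideal.span (s : Set R)).radical := by
    rw [Ideal.radical_eq_sInf]
    refine le_sInf fun J hJ => ?_
    exact hs.2 ⟨hJ.2, hJ.1⟩ (IsLocalRing.le_maximalIdeal hJ.2.ne_top)
  obtain ⟨c, hc⟩ := Ideal.exists_pow_le_of_le_radical_of_fg hrad (IsNoetherian.noetherian _)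
  obtain ⟨f, hf⟩ := h c
  set m := Ideal.span (Set.range (X : Fin d → MvPolynomial (Fin d) K)) with hm
  haveI hmax : m.IsMaximal := isMaximal_span_X K d
  let q : MvPolynomial (Fin d) K →+* jetAlgebra K d c := Ideal.Quotient.mk (m ^ (c + 1))
  have hqs : Function.Surjective q := Ideal.Quotient.mk_surjective
  have hker : RingHom.ker q = m ^ (c + 1) := Ideal.mk_ker
  have hkm : RingHom.ker q ≤ m := hker.le.trans (Ideal.pow_le_self (Nat.succ_ne_zero c))
  have hcm : (m.map q).comap q = m := by
    rw [Ideal.comap_map_of_surjective q hqs, ← RingHom.ker_eq_comap_bot, sup_eq_left.mpr hkm]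
  haveI hmq : (m.map q).IsMaximal := by
    rcases Ideal.map_eq_top_or_isMaximal_of_surjective q hqs hmax with h1 | h1
    · rw [h1, Ideal.comap_top] at hcm
      exact absurd hcm.symm hmax.ne_top
    · exact h1
  haveI hfm : ((m.map q).comap f).IsMaximal := Ideal.comap_isMaximal_of_surjective f hf
  have hR : (m.map q).comap f = IsLocalRing.maximalIdeal R := IsLocalRing.eq_maximalIdeal hfm
  have hR' : (IsLocalRing.maximalIdeal R).map f = m.map q := by
    rw [← hR, Ideal.map_comap_of_surjective f hf]
  choose g hg using fun x : R => hqs (f x)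
  have hT : (Ideal.span ((s.image g : Finset _) : Set (MvPolynomial (Fin d) K))).map q =
      (Ideal.span (s : Set R)).map f := by
    rw [Ideal.map_span, Ideal.map_span, Finset.coe_image, Set.image_image]
    simp only [hg]
  have hle : Ideal.span ((s.image g : Finset _) : Set (MvPolynomial (Fin d) K)) ≤ m := by
    rw [← hcm, ← Ideal.map_le_iff_le_comap, hT, ← hR']
    exact Ideal.map_mono hs.1.2
  have hpow : m ^ c ≤ Ideal.span ((s.image g : Finset _) : Set (MvPolynomial (Fin d) K)) ⊔
      m ^ (c + 1) := by
    have h1 : (m ^ c).map q ≤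
        (Ideal.span ((s.image g : Finset _) : Set (MvPolynomial (Fin d) K))).map q := by
      rw [hT, Ideal.map_pow, ← hR', ← Ideal.map_pow]
      exact Ideal.map_mono hc
    rwa [Ideal.map_le_iff_le_comap, Ideal.comap_map_of_surjective q hqs,
      ← RingHom.ker_eq_comap_bot, hker] at h1
  have hmin : m ∈ (Ideal.span
      ((s.image g : Finset _) : Set (MvPolynomial (Fin d) K))).minimalPrimes := by
    refine ⟨⟨hmax.isPrime, hle⟩, ?_⟩
    rintro p ⟨hp, hTp⟩ hpm
    haveI := hp
    exact le_of_pow_le_sup m p hpm c (hpow.trans (sup_le_sup_right hTp _))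
  have hfin : (d : ℕ∞) ≤ (IsLocalRing.maximalIdeal R).height := by
    rw [← hcard]
    refine (le_height_span_X K d).trans
      ((Ideal.height_le_card_of_mem_minimalPrimes_span_finset hmin).trans ?_)
    exact_mod_cast Finset.card_image_le
  rw [← IsLocalRing.maximalIdeal_height_eq_ringKrullDim]
  exact_mod_cast hfin
end

section
/- For each r ∈ ℕ let n_r ∈ ℕ, let T_r ⊆ ℂ^{n_r} be a constructible subset, and let π_r : ℂ^{n_{r+1}} → ℂ^{n_r} be a polynomial map (each coordinate given by a polynomial) such that π_r(T_{r+1}) ⊆ T_r. For r' ≥ r write π^{r'}_r : ℂ^{n_{r'}} → ℂ^{n_r} for the composite π_r ∘ π_{r+1} ∘ ⋯ ∘ π_{r'−1} (with π^r_r the identity). Fix r₀ ∈ ℕ and j ∈ T_{r₀}, and suppose that for every r' ≥ r₀ there exists x ∈ T_{r'} with π^{r'}_{r₀}(x) = j. Then there exists a sequence (j_r)_{r ≥ 0} with j_r ∈ T_r for every r, with π_r(j_{r+1}) = j_r for every r, and with j_{r₀} = j. -/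
/-- A subset of `ℂᵐ` is (polynomially) constructible if it is a finite union of sets of the
form `{x : p₁(x) = ⋯ = p_s(x) = 0 ∧ q(x) ≠ 0}` for polynomials `p₁,…,p_s, q`. -/
def PolyConstructible {m : ℕ} (C : Set (Fin m → ℂ)) : Prop :=
  ∃ (k : ℕ) (P : Fin k → Finset (MvPolynomial (Fin m) ℂ)) (Q : Fin k → MvPolynomial (Fin m) ℂ),
    C = ⋃ i : Fin k,
      {x : Fin m → ℂ | (∀ p ∈ P i, MvPolynomial.eval x p = 0) ∧ MvPolynomial.eval x (Q i) ≠ 0}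

/-- The composite `π^{r+k}_r = π_r ∘ π_{r+1} ∘ ⋯ ∘ π_{r+k−1} : ℂ^{n_{r+k}} → ℂ^{n_r}`
(with `π^r_r` the identity). -/
def compMaps (n : ℕ → ℕ) (π : ∀ r : ℕ, (Fin (n (r + 1)) → ℂ) → (Fin (n r) → ℂ)) (r : ℕ) :
    ∀ k : ℕ, (Fin (n (r + k)) → ℂ) → (Fin (n r) → ℂ)
  | 0 => id
  | k + 1 => fun x => compMaps n π r k (π (r + k) x)

/-- Countable Nullstellensatz over `ℂ`: a proper ideal in countably many variables has a zero. -/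
theorem exists_zero_of_ne_top {σ : Type} [Countable σ] (I : Ideal (MvPolynomial σ ℂ))
    (hI : I ≠ ⊤) : ∃ x : σ → ℂ, ∀ p ∈ I, MvPolynomial.eval x p = 0 := by
  obtain ⟨M, hM, hIM⟩ := Ideal.exists_le_maximal I hI
  letI : Field (MvPolynomial σ ℂ ⧸ M) := Ideal.Quotient.field M
  have hrank : Module.rank ℂ (MvPolynomial σ ℂ ⧸ M) ≤ Cardinal.aleph0 := by
    have h1 := LinearMap.rank_le_of_surjective (Ideal.Quotient.mkₐ ℂ M).toLinearMap
      (Ideal.Quotient.mkₐ_surjective ℂ M)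
    refine h1.trans ?_
    rw [MvPolynomial.rank_eq]
    exact Cardinal.mk_le_aleph0
  have halg : Algebra.IsAlgebraic ℂ (MvPolynomial σ ℂ ⧸ M) := by
    refine ⟨fun x => ?_⟩
    by_contra hx
    have h2 := (show Transcendental ℂ x from hx).linearIndependent_sub_inv.cardinal_le_rank
    have h3 := h2.trans hrank
    rw [Cardinal.mk_complex] at h3
    exact absurd h3 (not_le.mpr Cardinal.aleph0_lt_continuum)
  have hbij : Function.Bijective (algebraMap ℂ (MvPolynomial σ ℂ ⧸ M)) :=
    IsAlgClosed.algebraMap_bijective_of_isIntegral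
  choose g hg using hbij.2
  refine ⟨fun s => g (Ideal.Quotient.mk M (MvPolynomial.X s)), fun p hp => ?_⟩
  apply hbij.1
  have key : (algebraMap ℂ (MvPolynomial σ ℂ ⧸ M)).comp
      (MvPolynomial.eval fun s => g (Ideal.Quotient.mk M (MvPolynomial.X s)))
      = Ideal.Quotient.mk M := by
    apply MvPolynomial.ringHom_ext
    · intro r
      simp only [RingHom.comp_apply, MvPolynomial.eval_C]
      rfl
    · intro s
      simp only [RingHom.comp_apply, MvPolynomial.eval_X, hg]
  have h4 := RingHom.congr_fun key p
  simp only [RingHom.comp_apply] at h4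
  rw [h4, map_zero]
  exact Ideal.Quotient.eq_zero_iff_mem.mpr (hIM hp)

/-- Countable saturation of `ℂ` for polynomial equations. -/
theorem exists_limit_point {σ : Type} [Countable σ] (U : Ultrafilter ℕ) (w : ℕ → σ → ℂ) :
    ∃ x : σ → ℂ, ∀ p : MvPolynomial σ ℂ,
      (∀ᶠ k in (U : Filter ℕ), MvPolynomial.eval (w k) p = 0) → MvPolynomial.eval x p = 0 := by
  let I : Ideal (MvPolynomial σ ℂ) :=
    { carrier := {p | ∀ᶠ k in (U : Filter ℕ), MvPolynomial.eval (w k) p = 0}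
      zero_mem' := by simp
      add_mem' := by
        intro a b ha hb
        simp only [Set.mem_setOf_eq] at ha hb ⊢
        filter_upwards [ha, hb] with k h1 h2
        simp [h1, h2]
      smul_mem' := by
        intro c a ha
        simp only [Set.mem_setOf_eq] at ha ⊢
        filter_upwards [ha] with k h1
        simp [h1] }
  refine exists_zero_of_ne_top I ?_
  rw [Ideal.ne_top_iff_one]
  intro h
  have h' : ∀ᶠ k in (U : Filter ℕ), MvPolynomial.eval (w k) (1 : MvPolynomial σ ℂ) = 0 := h
  obtain ⟨k, hk⟩ := h'.exists
  simp at hk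

theorem exists_descending (n : ℕ → ℕ) (T : ∀ r : ℕ, Set (Fin (n r) → ℂ))
    (π : ∀ r : ℕ, (Fin (n (r + 1)) → ℂ) → (Fin (n r) → ℂ))
    (hmap : ∀ r, ∀ x ∈ T (r + 1), π r x ∈ T r) (N : ℕ) :
    ∀ x ∈ T N, ∃ z : ∀ r, Fin (n r) → ℂ,
      (∀ r ≤ N, z r ∈ T r) ∧ (∀ r < N, π r (z (r + 1)) = z r) ∧ z N = x := by
  induction N with
  | zero =>
    intro x hx
    refine ⟨Function.update (fun _ _ => 0) 0 x, ?_, by simp, by simp⟩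
    intro r hr
    obtain rfl : r = 0 := by omega
    simpa using hx
  | succ N ih =>
    intro x hx
    obtain ⟨z, h1, h2, h3⟩ := ih _ (hmap N x hx)
    refine ⟨Function.update z (N + 1) x, ?_, ?_, by simp⟩
    · intro r hr
      rcases eq_or_lt_of_le hr with rfl | hr
      · simpa using hx
      · rw [Function.update_of_ne (by omega)]
        exact h1 r (by omega)
    · intro r hr
      rw [Function.update_of_ne (show r ≠ N + 1 by omega)]
      rcases eq_or_lt_of_le (show r ≤ N by omega) with rfl | hr
      · simp [h3]
      · rw [Function.update_of_ne (by omega)]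
        exact h2 r hr

theorem compMaps_eq (n : ℕ → ℕ) (π : ∀ r : ℕ, (Fin (n (r + 1)) → ℂ) → (Fin (n r) → ℂ))
    (z : ∀ r, Fin (n r) → ℂ) (r : ℕ) (k : ℕ)
    (hz : ∀ s < r + k, π s (z (s + 1)) = z s) : compMaps n π r k (z (r + k)) = z r := by
  induction k with
  | zero => rfl
  | succ k ih =>
    have h : compMaps n π r (k + 1) (z (r + (k + 1)))
        = compMaps n π r k (π (r + k) (z (r + k + 1))) := rfl
    rw [h, hz (r + k) (by omega)]
    exact ih (fun s hs => hz s (by omega))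

/-- Given a compatible family of constructible sets `T_r ⊆ ℂ^{n_r}` with
polynomial transition maps `π_r : ℂ^{n_{r+1}} → ℂ^{n_r}`, any point `j ∈ T_{r₀}` admitting
arbitrary extensions (i.e. lying in the image of `T_{r₀+k}` for every `k`) belongs to a full
compatible sequence `(j_r)_{r ≥ 0}` with `j_r ∈ T_r` and `π_r (j_{r+1}) = j_r` for all `r`. -/
theorem exists_compatible_sequence
    (n : ℕ → ℕ) (T : ∀ r : ℕ, Set (Fin (n r) → ℂ))
    (hT : ∀ r, PolyConstructible (T r))
    (π : ∀ r : ℕ, (Fin (n (r + 1)) → ℂ) → (Fin (n r) → ℂ))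
    (P : ∀ r : ℕ, Fin (n r) → MvPolynomial (Fin (n (r + 1))) ℂ)
    (hπ : ∀ r x i, π r x i = MvPolynomial.eval x (P r i))
    (hmap : ∀ r, ∀ x ∈ T (r + 1), π r x ∈ T r)
    (r₀ : ℕ) (j : Fin (n r₀) → ℂ) (hj : j ∈ T r₀)
    (hext : ∀ k : ℕ, ∃ x ∈ T (r₀ + k), compMaps n π r₀ k x = j) :
    ∃ js : ∀ r : ℕ, Fin (n r) → ℂ,
      (∀ r, js r ∈ T r) ∧ (∀ r, π r (js (r + 1)) = js r) ∧ js r₀ = j := by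
  have hz : ∀ k, ∃ z : ∀ r, Fin (n r) → ℂ, (∀ r ≤ r₀ + k, z r ∈ T r) ∧
      (∀ r < r₀ + k, π r (z (r + 1)) = z r) ∧ z r₀ = j := by
    intro k
    obtain ⟨x, hx, hxj⟩ := hext k
    obtain ⟨z, h1, h2, h3⟩ := exists_descending n T π hmap _ x hx
    refine ⟨z, h1, h2, ?_⟩
    rw [← compMaps_eq n π z r₀ k h2, h3, hxj]
  choose z hzT hzπ hzj using hz
  choose K A Q hTeq using hT
  let U : Ultrafilter ℕ := Filter.hyperfilter ℕ
  have hU : ∀ r : ℕ, ∀ᶠ k in (U : Filter ℕ), r < r₀ + k := by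
    intro r
    have h : ∀ᶠ k in Filter.atTop, r < r₀ + k := by
      filter_upwards [Filter.eventually_gt_atTop r] with k hk
      omega
    exact (Nat.hyperfilter_le_atTop) h
  have hpiece : ∀ r, ∃ i : Fin (K r), ∀ᶠ k in (U : Filter ℕ),
      (∀ p ∈ A r i, MvPolynomial.eval (z k r) p = 0) ∧
        MvPolynomial.eval (z k r) (Q r i) ≠ 0 := by
    intro r
    rw [← Ultrafilter.eventually_exists_iff]
    filter_upwards [hU r] with k hk
    have h := hzT k r hk.le
    rw [hTeq r] at h
    simpa using h
  choose i hi using hpiece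
  let w : ℕ → ((Σ r, Fin (n r)) ⊕ ℕ) → ℂ := fun k =>
    Sum.elim (fun s => z k s.1 s.2) (fun r => (MvPolynomial.eval (z k r) (Q r (i r)))⁻¹)
  obtain ⟨x, hx⟩ := exists_limit_point U w
  let e : ∀ r, Fin (n r) → ((Σ r, Fin (n r)) ⊕ ℕ) := fun r a => Sum.inl ⟨r, a⟩
  have hwe : ∀ k r, w k ∘ e r = z k r := fun k r => rfl
  refine ⟨fun r => x ∘ e r, ?_, ?_, ?_⟩
  · intro r
    rw [hTeq r]
    refine Set.mem_iUnion.mpr ⟨i r, ?_, ?_⟩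
    · intro p hp
      have h := hx (MvPolynomial.rename (e r) p) (by
        filter_upwards [hi r] with k hk
        rw [MvPolynomial.eval_rename, hwe]
        exact hk.1 p hp)
      rwa [MvPolynomial.eval_rename] at h
    · intro h0
      have h := hx (MvPolynomial.rename (e r) (Q r (i r)) * MvPolynomial.X (Sum.inr r) - 1) (by
        filter_upwards [hi r] with k hk
        rw [map_sub, map_mul, MvPolynomial.eval_rename, hwe, MvPolynomial.eval_X, map_one]
        change _ * (MvPolynomial.eval (z k r) (Q r (i r)))⁻¹ - 1 = 0
        rw [mul_inv_cancel₀ hk.2, sub_self])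
      rw [map_sub, map_mul, MvPolynomial.eval_rename, h0] at h
      simp at h
  · intro r
    funext a
    rw [hπ]
    have h := hx (MvPolynomial.rename (e (r + 1)) (P r a) - MvPolynomial.X (e r a)) (by
      filter_upwards [hU r] with k hk
      rw [map_sub, MvPolynomial.eval_rename, hwe, MvPolynomial.eval_X, ← hπ, hzπ k r hk]
      exact sub_self _)
    rw [map_sub, MvPolynomial.eval_rename, MvPolynomial.eval_X] at h
    exact sub_eq_zero.mp h
  · funext a
    have h := hx (MvPolynomial.X (e r₀ a) - MvPolynomial.C (j a)) (by
      refine Filter.Eventually.of_forall fun k => ?_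
      rw [map_sub, MvPolynomial.eval_X, MvPolynomial.eval_C, ← hzj k]
      exact sub_self _)
    rw [map_sub, MvPolynomial.eval_X, MvPolynomial.eval_C] at h
    exact sub_eq_zero.mp h
end

section
/- Let n ≥ 1 and let C₀ ⊇ C₁ ⊇ C₂ ⊇ ⋯ be a decreasing sequence of nonempty constructible subsets of ℂⁿ. Then the intersection ⋂_{j ∈ ℕ} C_j is nonempty. -/
open Cardinal

lemma embed (F : Type) [Field F] [Algebra F ℂ] [Countable F] (K : Type) [Field K] [Algebra F K]
    [Countable K] : Nonempty (K →ₐ[F] ℂ) := by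
  obtain ⟨s, hs⟩ := exists_isTranscendenceBasis F K
  obtain ⟨t, ht⟩ := exists_isTranscendenceBasis F ℂ
  have h1 : #ℂ = #t := IsAlgClosed.cardinal_eq_cardinal_transcendence_basis_of_aleph0_lt' _ ht
    (mk_le_aleph0) (by rw [Cardinal.mk_complex]; exact aleph0_lt_continuum)
  have h2 : #s ≤ #t := by
    rw [← h1, Cardinal.mk_complex]; exact mk_le_aleph0.trans aleph0_le_continuum
  obtain ⟨e⟩ := h2
  have hi := ht.1.comp e e.injective
  let φ : Algebra.adjoin F (Set.range ((↑) : s → K)) →ₐ[F] ℂ :=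
    (MvPolynomial.aeval (((↑) : t → ℂ) ∘ e)).comp hs.1.aevalEquiv.symm.toAlgHom
  have hφ : Function.Injective φ := by
    have : Function.Injective (MvPolynomial.aeval (R := F) (((↑) : t → ℂ) ∘ e)) := hi
    exact this.comp hs.1.aevalEquiv.symm.injective
  let := φ.toRingHom.toAlgebra
  have : IsScalarTower F (Algebra.adjoin F (Set.range ((↑) : s → K))) ℂ :=
    IsScalarTower.of_algebraMap_eq' φ.comp_algebraMap.symm
  have : FaithfulSMul (Algebra.adjoin F (Set.range ((↑) : s → K))) ℂ :=
    (faithfulSMul_iff_algebraMap_injective _ _).2 hφ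
  have := hs.isAlgebraic
  exact ⟨(IsAlgClosed.lift (R := Algebra.adjoin F (Set.range ((↑) : s → K))) (S := K) (M := ℂ)).restrictScalars F⟩

open MvPolynomial Filter in
lemma key (n : ℕ) (F : Type) [Field F] [Algebra F ℂ] [Countable F] (x : ℕ → Fin n → ℂ)
    (U : Ultrafilter ℕ) : ∃ y : Fin n → ℂ, ∀ p : MvPolynomial (Fin n) F,
      aeval y p = 0 ↔ ∀ᶠ j in (U : Filter ℕ), aeval (x j) p = 0 := by
  let I : Ideal (MvPolynomial (Fin n) F) :=
    { carrier := {p | ∀ᶠ j in (U : Filter ℕ), aeval (x j) p = 0}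
      add_mem' := fun {a b} ha hb => by
        filter_upwards [ha, hb] with j h1 h2
        simp [h1, h2]
      zero_mem' := by simp
      smul_mem' := fun c a ha => by
        filter_upwards [ha] with j h1
        simp [h1] }
  have hI : ∀ p, p ∈ I ↔ ∀ᶠ j in (U : Filter ℕ), aeval (x j) p = 0 := fun p => Iff.rfl
  have : I.IsPrime := by
    refine ⟨fun h => ?_, fun {a b} h => ?_⟩
    · have := (hI 1).1 (h ▸ Submodule.mem_top)
      simp at this
      exact U.neBot.ne this
    · simpa [hI, Ultrafilter.eventually_or] using h
  have : Countable (MvPolynomial (Fin n) F) := by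
    rw [← mk_le_aleph0_iff]
    refine MvPolynomial.cardinalMk_le_max_lift.trans ?_
    simp
  have : Countable (MvPolynomial (Fin n) F ⧸ I) := Ideal.Quotient.mk_surjective.countable
  have : Countable (FractionRing (MvPolynomial (Fin n) F ⧸ I)) := by
    rw [← mk_le_aleph0_iff]
    exact IsLocalization.cardinalMk_le (S := nonZeroDivisors (MvPolynomial (Fin n) F ⧸ I)) |>.trans mk_le_aleph0
  obtain ⟨f⟩ := embed F (FractionRing (MvPolynomial (Fin n) F ⧸ I))
  let g : MvPolynomial (Fin n) F →ₐ[F] ℂ := f.comp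
    ((IsScalarTower.toAlgHom F (MvPolynomial (Fin n) F ⧸ I) (FractionRing (MvPolynomial (Fin n) F ⧸ I))).comp
      (Ideal.Quotient.mkₐ F I))
  refine ⟨fun i => g (X i), fun p => ?_⟩
  have : aeval (fun i => g (X i)) = g := by ext; simp
  rw [this, ← hI]
  simp only [g, AlgHom.comp_apply]
  rw [map_eq_zero_iff f f.injective]
  simp [Ideal.Quotient.eq_zero_iff_mem]

/-- Let `n ≥ 1` and let `C₀ ⊇ C₁ ⊇ ⋯` be a decreasing sequence of nonempty
constructible subsets of `ℂⁿ`. Then `⋂ⱼ Cⱼ` is nonempty. -/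
theorem nonempty_iInter_of_decreasing_constructible
    (n : ℕ) (hn : 1 ≤ n) (C : ℕ → Set (Fin n → ℂ))
    (hcon : ∀ j, PolyConstructible (C j))
    (hne : ∀ j, (C j).Nonempty)
    (hdec : ∀ j, C (j + 1) ⊆ C j) :
    (⋂ j : ℕ, C j).Nonempty := by
  choose k P Q hC using hcon
  choose x hx using hne
  let S : Set ℂ := (⋃ j, ⋃ i, ⋃ p ∈ P j i, (p.coeffs : Set ℂ)) ∪ ⋃ j, ⋃ i, ((Q j i).coeffs : Set ℂ)
  have hS : S.Countable := by
    refine Set.Countable.union ?_ ?_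
    · refine Set.countable_iUnion fun j => Set.countable_iUnion fun i => ?_
      exact Set.Countable.biUnion (P j i).countable_toSet fun p _ => p.coeffs.countable_toSet
    · exact Set.countable_iUnion fun j => Set.countable_iUnion fun i =>
        (Q j i).coeffs.countable_toSet
  let F := IntermediateField.adjoin ℚ S
  have hF : Countable F := by
    rw [← mk_le_aleph0_iff]
    refine (IntermediateField.cardinalMk_adjoin_le ℚ S).trans ?_
    have := mk_le_aleph0_iff.2 hS.to_subtype
    simp [this]
  obtain ⟨y, hy⟩ := key n F x (Filter.hyperfilter ℕ)
  have hlift : ∀ p : MvPolynomial (Fin n) ℂ, (p.coeffs : Set ℂ) ⊆ S →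
      (MvPolynomial.eval y p = 0 ↔
        ∀ᶠ j in (Filter.hyperfilter ℕ : Filter ℕ), MvPolynomial.eval (x j) p = 0) := by
    intro p hp
    obtain ⟨q, rfl⟩ : p ∈ Set.range (MvPolynomial.map (algebraMap F ℂ)) := by
      rw [MvPolynomial.mem_range_map_iff_coeffs_subset]
      intro c hc
      exact ⟨⟨c, IntermediateField.subset_adjoin ℚ S (hp hc)⟩, rfl⟩
    simpa only [MvPolynomial.eval_map, MvPolynomial.aeval_def] using hy q
  have hanti : Antitone C := antitone_nat_of_succ_le hdec
  refine ⟨y, Set.mem_iInter.2 fun j => ?_⟩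
  have hev : ∀ᶠ l in (Filter.hyperfilter ℕ : Filter ℕ), ∃ i : Fin (k j),
      (∀ p ∈ P j i, MvPolynomial.eval (x l) p = 0) ∧ MvPolynomial.eval (x l) (Q j i) ≠ 0 := by
    filter_upwards [Nat.hyperfilter_le_atTop (Filter.eventually_ge_atTop j)] with l hl
    have h := hanti hl (hx l)
    rw [hC j] at h
    simpa using h
  obtain ⟨i, hi⟩ := Ultrafilter.eventually_exists_iff.1 hev
  rw [hC j]
  refine Set.mem_iUnion.2 ⟨i, fun p hp => ?_, fun h => ?_⟩
  · refine (hlift p ?_).2 (hi.mono fun l hl => hl.1 p hp)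
    intro c hc
    refine Or.inl ?_
    simp only [Set.mem_iUnion]
    exact ⟨j, i, p, hp, hc⟩
  · have h0 := (hlift (Q j i) (fun c hc => Or.inr ?_)).1 h
    · obtain ⟨l, h1, h2⟩ := (h0.and hi).exists
      exact h2.2 h1
    · simp only [Set.mem_iUnion]
      exact ⟨j, i, hc⟩
end

section
/- Let n ≥ 1 and let (C_j)_{j ∈ ℕ} be a countable family of constructible subsets of ℂⁿ. Then the closure of ⋂_{j ∈ ℕ} C_j in the standard (Euclidean) topology on ℂⁿ is an algebraic set: there exist finitely many polynomials q₁,…,q_s ∈ ℂ[X₁,…,X_n] such that this closure equals { x ∈ ℂⁿ : q₁(x) = ⋯ = q_s(x) = 0 }. -/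
theorem integral_lift {B A K : Type*} [CommRing B] [IsDomain B] [IsIntegrallyClosed B] [CommRing A]
    [IsDomain A] [Field K] (g : B →+* A) (ginj : Function.Injective g) (gint : g.IsIntegral) (H : A) :
    ∃ F : Polynomial B, F.Monic ∧ F.eval₂ g H = 0 ∧ (H ≠ 0 → F.coeff 0 ≠ 0) ∧
      ∀ (y : B →+* K) (t : K), Function.Surjective y → F.eval₂ y t = 0 →
        ∃ Q : Ideal A, Q.IsMaximal ∧ ∀ f : Polynomial B, f.eval₂ y t = 0 → f.eval₂ g H ∈ Q := by
  let _ : Algebra B A := g.toAlgebra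
  have : Algebra.IsIntegral B A := ⟨gint⟩
  have : FaithfulSMul B A := (faithfulSMul_iff_algebraMap_injective _ _).2 ginj
  have hint : IsIntegral B H := Algebra.IsIntegral.isIntegral H
  refine ⟨minpoly B H, minpoly.monic hint, minpoly.aeval B H,
    fun h h0 => ?_, ?_⟩
  · obtain ⟨r, hr⟩ := Polynomial.X_dvd_iff.2 h0
    have h1 := minpoly.aeval B H
    rw [hr, map_mul, Polynomial.aeval_X] at h1
    have h2 := (mul_eq_zero.1 h1).resolve_left h
    rw [minpoly.isIntegrallyClosed_dvd_iff hint] at h2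
    obtain ⟨s, hs⟩ := h2
    have h3 : minpoly B H * (Polynomial.X * s) = minpoly B H * 1 := by
      rw [mul_one]
      conv_rhs => rw [hr, hs]
      ring
    have h4 := mul_left_cancel₀ (minpoly.monic hint).ne_zero h3
    simpa using congrArg (Polynomial.eval 0) h4
  intro y t hy ht
  let ψ : Polynomial B →+* A := Polynomial.eval₂RingHom g H
  let ε : Polynomial B →+* K := Polynomial.eval₂RingHom y t
  have hψint : ψ.IsIntegral := by
    apply RingHom.IsIntegral.tower_top (Polynomial.C) ψ
    have : ψ.comp Polynomial.C = g := by
      ext b; simp [ψ]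
    rw [this]
    exact gint
  have hεs : Function.Surjective ε := fun c => by
    obtain ⟨b, rfl⟩ := hy c
    exact ⟨Polynomial.C b, by simp [ε]⟩
  have : (RingHom.ker ε).IsMaximal := RingHom.ker_isMaximal_of_surjective ε hεs
  have hker : RingHom.ker ψ ≤ RingHom.ker ε := by
    intro f hf
    have hf' : Polynomial.aeval H f = 0 := hf
    rw [minpoly.isIntegrallyClosed_dvd_iff hint] at hf'
    obtain ⟨r, rfl⟩ := hf'
    rw [RingHom.mem_ker, map_mul]
    have : ε (minpoly B H) = 0 := ht
    rw [this, zero_mul]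
  let _ : Algebra (Polynomial B) A := ψ.toAlgebra
  have : Algebra.IsIntegral (Polynomial B) A := ⟨hψint⟩
  obtain ⟨Q, Qmax, hQ⟩ := Ideal.exists_ideal_over_maximal_of_isIntegral (S := A)
    (RingHom.ker ε) hker
  refine ⟨Q, Qmax, fun f hf => ?_⟩
  have h1 : f ∈ RingHom.ker ε := hf
  rw [← hQ] at h1
  exact h1

open MvPolynomial in
theorem noether_points {n : ℕ} (P : Ideal (MvPolynomial (Fin n) ℂ)) [hP : P.IsPrime] :
    ∃ (d : ℕ) (G : Fin d → MvPolynomial (Fin n) ℂ),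
      (∀ h : MvPolynomial (Fin n) ℂ, ∃ F : Polynomial (MvPolynomial (Fin d) ℂ), F.Monic ∧
        (∀ x : Fin n → ℂ, (∀ p ∈ P, eval x p = 0) →
          (F.map (eval fun i => eval x (G i))).eval (eval x h) = 0) ∧
        (h ∉ P → F.coeff 0 ≠ 0) ∧
        (∀ (y : Fin d → ℂ) (t : ℂ), (F.map (eval y)).eval t = 0 →
          ∃ x : Fin n → ℂ, (∀ p ∈ P, eval x p = 0) ∧ (fun i => eval x (G i)) = y ∧
            eval x h = t)) := by
  obtain ⟨d, -, g, ginj, gint⟩ := exists_integral_inj_algHom_of_quotient P hP.ne_top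
  choose G hG using fun i => Ideal.Quotient.mk_surjective (g (X i))
  refine ⟨d, G, fun h => ?_⟩
  obtain ⟨F, hF, hF0, hF1, hF2⟩ := integral_lift (K := ℂ) g.toRingHom ginj gint
    (Ideal.Quotient.mk P h)
  -- evaluation at a point
  have key : ∀ (x : Fin n → ℂ) (hx : ∀ p ∈ P, eval x p = 0),
      ∃ e : (MvPolynomial (Fin n) ℂ ⧸ P) →ₐ[ℂ] ℂ, (∀ p, e (Ideal.Quotient.mk P p) = eval x p) ∧
        ∀ b, e (g b) = eval (fun i => eval x (G i)) b := by
    intro x hx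
    let e : (MvPolynomial (Fin n) ℂ ⧸ P) →ₐ[ℂ] ℂ := Ideal.Quotient.liftₐ P (aeval x) hx
    have he : ∀ p, e (Ideal.Quotient.mk P p) = eval x p := fun p => rfl
    refine ⟨e, he, fun b => ?_⟩
    have : e.comp g = aeval (fun i => eval x (G i)) := by
      ext i
      simp [← hG, he]
    exact DFunLike.congr_fun this b
  refine ⟨F, hF, ?_, ?_, ?_⟩
  · intro x hx
    obtain ⟨e, he, heg⟩ := key x hx
    have h2 := congrArg e.toRingHom hF0
    rw [Polynomial.hom_eval₂, map_zero] at h2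
    rw [Polynomial.eval_map, ← he h, ← h2]
    have : eval (fun i => eval x (G i)) = e.toRingHom.comp g.toRingHom :=
      RingHom.ext fun b => (heg b).symm
    rw [this]
    rfl
  · intro hh
    exact hF1 fun h0 => hh (Ideal.Quotient.eq_zero_iff_mem.1 h0)
  · intro y t ht
    rw [Polynomial.eval_map] at ht
    obtain ⟨Q, Qmax, hQ⟩ := hF2 (eval y) t (fun c => ⟨C c, by simp⟩) ht
    have : (Q.comap (Ideal.Quotient.mk P)).IsMaximal :=
      Ideal.comap_isMaximal_of_surjective _ Ideal.Quotient.mk_surjective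
    obtain ⟨x, hx⟩ := (isMaximal_iff_eq_vanishingIdeal_singleton (K := ℂ)).1 this
    have hmem : ∀ p, Ideal.Quotient.mk P p ∈ Q ↔ eval x p = 0 := by
      intro p
      rw [← Ideal.mem_comap, hx, mem_vanishingIdeal_singleton_iff]
      rfl
    have hxP : ∀ p ∈ P, eval x p = 0 := by
      intro p hp
      rw [← hmem, Ideal.Quotient.eq_zero_iff_mem.2 hp]
      exact Q.zero_mem
    obtain ⟨e, he, heg⟩ := key x hxP
    have heQ : ∀ a ∈ Q, e a = 0 := by
      intro a ha
      obtain ⟨p, rfl⟩ := Ideal.Quotient.mk_surjective a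
      rw [he, ← hmem]
      exact ha
    refine ⟨x, hxP, ?_, ?_⟩
    · funext i
      have := heQ _ (hQ (Polynomial.C (X i - C (y i))) (by simp))
      rw [Polynomial.eval₂_C] at this
      have h3 := (heg _).symm.trans this
      simpa [sub_eq_zero] using h3
    · have := heQ _ (hQ (Polynomial.X - Polynomial.C (C t)) (by simp))
      rw [Polynomial.eval₂_sub, Polynomial.eval₂_C, Polynomial.eval₂_X, map_sub, he] at this
      have h3 := heg (C t)
      simp only [eval_C] at h3
      have h4 : e (g.toRingHom (C t)) = t := h3
      rw [h4, sub_eq_zero] at this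
      exact this

theorem monic_root_near (p : Polynomial ℂ) (hp : p.Monic) (c : ℂ) (ε : ℝ) (hε : 0 < ε)
    (h : ‖p.eval c‖ < ε ^ p.natDegree) : ∃ t, p.eval t = 0 ∧ ‖c - t‖ < ε := by
  by_contra! hcon
  have hs := IsAlgClosed.splits p
  rw [hs.eval_eq_prod_roots_of_monic hp, ← hs.natDegree_eq_card_roots.symm] at h
  have : ∀ s : Multiset ℂ, (∀ t ∈ s, ε ≤ ‖c - t‖) →
      ε ^ s.card ≤ ‖(s.map (fun a => c - a)).prod‖ := by
    intro s
    induction s using Multiset.induction with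
    | empty => simp
    | cons a s ih =>
      intro hs
      simp only [Multiset.card_cons, Multiset.map_cons, Multiset.prod_cons, norm_mul, pow_succ']
      gcongr
      · exact hs a (by simp)
      · exact ih fun t ht => hs t (by simp [ht])
  refine absurd h (not_lt.2 (this _ fun t ht => hcon t ?_))
  exact (Polynomial.mem_roots'.1 ht).2

open MvPolynomial in
theorem dense_ne_zero {d : ℕ} (b : MvPolynomial (Fin d) ℂ) (hb : b ≠ 0) (y : Fin d → ℂ) :
    ∃ᶠ z in nhds y, eval z b ≠ 0 := by
  intro h
  apply hb
  have h1 : AnalyticOnNhd ℂ (fun z : Fin d → ℂ => eval z b) Set.univ :=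
    AnalyticOnNhd.eval_mvPolynomial b
  have := h1.eq_of_eventuallyEq (g := 0) (z₀ := y) (fun z _ => analyticAt_const)
    (h.mono fun z hz => by simpa using hz)
  apply MvPolynomial.funext
  intro z
  simpa using congrFun this z

open MvPolynomial in
theorem continuous_eval_map {d : ℕ} (F : Polynomial (MvPolynomial (Fin d) ℂ)) (c : ℂ) :
    Continuous fun z : Fin d → ℂ => (F.map (eval z)).eval c := by
  simp only [Polynomial.eval_map, Polynomial.eval₂_eq_sum_range]
  exact continuous_finsetSum _ fun i _ => (continuous_eval _).mul continuous_const

open MvPolynomial in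
theorem root_bound {d : ℕ} (F : Polynomial (MvPolynomial (Fin d) ℂ)) (hF : F.Monic) :
    ∃ M : (Fin d → ℂ) → ℝ, Continuous M ∧
      ∀ z t, (F.map (eval z)).eval t = 0 → ‖t‖ ≤ M z := by
  refine ⟨fun z => ∑ j ∈ Finset.range F.natDegree, ‖eval z (F.coeff j)‖ + 1, ?_, ?_⟩
  · exact (continuous_finsetSum _ fun i _ => (continuous_eval _).norm).add continuous_const
  · intro z t ht
    have hm : (F.map (eval z)).Monic := hF.map _
    have h1 := Polynomial.IsRoot.norm_lt_cauchyBound hm.ne_zero ht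
    have h2 : (F.map (eval z)).cauchyBound ≤
        ∑ j ∈ Finset.range F.natDegree, ‖eval z (F.coeff j)‖₊ + 1 := by
      unfold Polynomial.cauchyBound
      rw [hm.leadingCoeff, nnnorm_one, div_one, hF.natDegree_map]
      gcongr
      apply Finset.sup_le
      intro j hj
      rw [Polynomial.coeff_map]
      exact Finset.single_le_sum (f := fun j => ‖eval z (F.coeff j)‖₊) (fun _ _ => zero_le) hj
    have h3 := h1.le.trans h2
    have h4 := NNReal.coe_le_coe.2 h3
    simpa using h4

open MvPolynomial Filter Topology in
theorem zariski_open_dense {n : ℕ} (P : Ideal (MvPolynomial (Fin n) ℂ)) [hP : P.IsPrime]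
    (q : MvPolynomial (Fin n) ℂ) (hq : q ∉ P) (x : Fin n → ℂ) (hx : ∀ p ∈ P, eval x p = 0) :
    x ∈ closure {x' : Fin n → ℂ | (∀ p ∈ P, eval x' p = 0) ∧ eval x' q ≠ 0} := by
  obtain ⟨d, G, hG⟩ := noether_points P
  set π : (Fin n → ℂ) → (Fin d → ℂ) := fun x i => eval x (G i) with hπ
  have hπc : Continuous π := continuous_pi fun i => continuous_eval _
  choose Fc hFc hFc1 _ _ using fun i => hG (X i)
  -- the fibre is finite
  have hfib : {x' : Fin n → ℂ | (∀ p ∈ P, eval x' p = 0) ∧ π x' = π x}.Finite := by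
    refine (Set.Finite.pi' (t := fun i => {t : ℂ | ((Fc i).map (eval (π x))).eval t = 0})
      fun i => ?_).subset ?_
    · refine (((Fc i).map (eval (π x))).roots.toFinset.finite_toSet).subset ?_
      intro t ht
      simp only [Finset.mem_coe, Multiset.mem_toFinset]
      exact (Polynomial.mem_roots ((hFc i).map _).ne_zero).2 ht
    · rintro x' ⟨h1, h2⟩ i
      have := hFc1 i x' h1
      rw [eval_X] at this
      rw [← h2]
      exact this
  -- separating polynomial
  obtain ⟨h, hhx, hh⟩ : ∃ h : MvPolynomial (Fin n) ℂ, eval x h ≠ 0 ∧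
      ∀ x', (∀ p ∈ P, eval x' p = 0) → π x' = π x → x' ≠ x → eval x' h = 0 := by
    have : ∀ x' : Fin n → ℂ, ∃ l : MvPolynomial (Fin n) ℂ, eval x l ≠ 0 ∧
        (x' ≠ x → eval x' l = 0) := by
      intro x'
      by_cases hxx : x' = x
      · exact ⟨1, by simp, fun h => absurd hxx h⟩
      · obtain ⟨i, hi⟩ := Function.ne_iff.1 hxx
        exact ⟨X i - C (x' i), by simpa [sub_eq_zero] using Ne.symm hi, by simp⟩
    choose l hl1 hl2 using this
    refine ⟨∏ x' ∈ hfib.toFinset, l x', ?_, ?_⟩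
    · rw [map_prod]
      exact Finset.prod_ne_zero_iff.2 fun x' _ => hl1 x'
    · intro x' h1 h2 h3
      rw [map_prod]
      exact Finset.prod_eq_zero (hfib.mem_toFinset.2 ⟨h1, h2⟩) (hl2 x' h3)
  obtain ⟨F, hF, hF1, -, hF3⟩ := hG h
  obtain ⟨Fq, hFq, hFq1, hFq2, -⟩ := hG q
  have hb := hFq2 hq
  -- approximating sequence
  have hseq : ∀ k : ℕ, ∃ x' : Fin n → ℂ, (∀ p ∈ P, eval x' p = 0) ∧ eval x' q ≠ 0 ∧
      dist (π x') (π x) < 1 / ((k : ℝ) + 1) ∧ dist (eval x' h) (eval x h) < 1 / ((k : ℝ) + 1) := by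
    intro k
    have hε : (0 : ℝ) < 1 / ((k : ℝ) + 1) := by positivity
    have e1 : ∀ᶠ z in 𝓝 (π x), dist z (π x) < 1 / ((k : ℝ) + 1) := Metric.ball_mem_nhds _ hε
    have e2 : ∀ᶠ z in 𝓝 (π x), ‖(F.map (eval z)).eval (eval x h)‖ <
        (1 / ((k : ℝ) + 1)) ^ F.natDegree := by
      apply (continuous_eval_map F (eval x h)).norm.continuousAt.eventually_lt_const
      have := hF1 x hx
      change ‖(F.map (eval (π x))).eval (eval x h)‖ < _
      change (F.map (eval (π x))).eval (eval x h) = 0 at this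
      rw [this, norm_zero]
      positivity
    obtain ⟨z, hz, hz1, hz2⟩ := ((dense_ne_zero _ hb (π x)).and_eventually (e1.and e2)).exists
    have hm : (F.map (eval z)).Monic := hF.map _
    obtain ⟨t, ht, htd⟩ := monic_root_near _ hm (eval x h) _ hε (by rwa [hF.natDegree_map])
    obtain ⟨x', hx', hxz, hxt⟩ := hF3 z t ht
    have hxz' : π x' = z := hxz
    refine ⟨x', hx', ?_, by rwa [hxz'], ?_⟩
    · intro h0
      apply hz
      have h5 := hFq1 x' hx'
      rw [h0] at h5
      change (Fq.map (eval (π x'))).eval 0 = 0 at h5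
      rwa [hxz', ← Polynomial.coeff_zero_eq_eval_zero, Polynomial.coeff_map] at h5
    · rw [hxt, dist_comm, dist_eq_norm]
      exact htd
  choose u hu1 hu2 hu3 hu4 using hseq
  have hlim1 : Tendsto (fun k => π (u k)) atTop (𝓝 (π x)) :=
    tendsto_iff_dist_tendsto_zero.2 (squeeze_zero (fun _ => dist_nonneg) (fun k => (hu3 k).le)
      tendsto_one_div_add_atTop_nhds_zero_nat)
  have hlim2 : Tendsto (fun k => eval (u k) h) atTop (𝓝 (eval x h)) :=
    tendsto_iff_dist_tendsto_zero.2 (squeeze_zero (fun _ => dist_nonneg) (fun k => (hu4 k).le)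
      tendsto_one_div_add_atTop_nhds_zero_nat)
  have hbd : ∀ i, ∃ R : ℝ, ∀ k, ‖u k i‖ ≤ R := by
    intro i
    obtain ⟨M, hM, hM1⟩ := root_bound (Fc i) (hFc i)
    obtain ⟨R, hR⟩ := ((hM.tendsto (π x)).comp hlim1).bddAbove_range
    refine ⟨R, fun k => (hM1 (π (u k)) (u k i) ?_).trans (hR ⟨k, rfl⟩)⟩
    have := hFc1 i (u k) (hu1 k)
    rw [eval_X] at this
    exact this
  choose R hR using hbd
  have hK : IsCompact (Set.pi Set.univ fun i : Fin n => Metric.closedBall (0 : ℂ) (R i)) :=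
    isCompact_univ_pi fun i => isCompact_closedBall _ _
  obtain ⟨a, -, φ, hφ, ha⟩ := hK.tendsto_subseq (x := u) (fun k i _ => by simpa using hR i k)
  have haP : ∀ p ∈ P, eval a p = 0 := by
    intro p hp
    have h1 := ((continuous_eval p).tendsto a).comp ha
    refine tendsto_nhds_unique h1 ?_
    have : (fun x => eval x p) ∘ u ∘ φ = fun _ => 0 := by
      funext k
      exact hu1 (φ k) p hp
    rw [this]
    exact tendsto_const_nhds
  have haπ : π a = π x :=
    tendsto_nhds_unique ((hπc.tendsto a).comp ha) (hlim1.comp hφ.tendsto_atTop)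
  have hah : eval a h = eval x h :=
    tendsto_nhds_unique (((continuous_eval h).tendsto a).comp ha) (hlim2.comp hφ.tendsto_atTop)
  have hax : a = x := by
    by_contra hne
    exact hhx (hah ▸ hh a haP haπ hne)
  rw [← hax]
  exact mem_closure_of_tendsto ha (Eventually.of_forall fun k => ⟨hu1 _, hu2 _⟩)

open MvPolynomial in
theorem baire_part {n : ℕ} (P : Ideal (MvPolynomial (Fin n) ℂ)) [hP : P.IsPrime]
    (q : ℕ → MvPolynomial (Fin n) ℂ) (hq : ∀ j, q j ∉ P) (x : Fin n → ℂ)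
    (hx : ∀ p ∈ P, eval x p = 0) :
    x ∈ closure {x' : Fin n → ℂ | (∀ p ∈ P, eval x' p = 0) ∧ ∀ j, eval x' (q j) ≠ 0} := by
  let Z : Set (Fin n → ℂ) := {x' | ∀ p ∈ P, eval x' p = 0}
  have hZ : IsClosed Z := by
    have : Z = ⋂ p ∈ P, {x' | eval x' p = 0} := by ext; simp [Z]
    rw [this]
    exact isClosed_biInter fun p _ => isClosed_eq (continuous_eval p) continuous_const
  have : CompleteSpace Z := hZ.completeSpace_coe
  have hd : Dense (⋂ j, {z : Z | eval (z : Fin n → ℂ) (q j) ≠ 0}) := by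
    apply dense_iInter_of_isOpen
    · intro j
      exact isOpen_ne_fun ((continuous_eval _).comp continuous_subtype_val) continuous_const
    · intro j z
      rw [closure_subtype]
      refine closure_mono ?_ (zariski_open_dense P (q j) (hq j) z z.2)
      rintro x' ⟨h1, h2⟩
      exact ⟨⟨x', h1⟩, h2, rfl⟩
  have h1 := hd ⟨x, hx⟩
  rw [closure_subtype] at h1
  refine closure_mono ?_ h1
  rintro _ ⟨z, hz, rfl⟩
  exact ⟨z.2, fun j => Set.mem_iInter.1 hz j⟩

open MvPolynomial in
theorem generic_open {n : ℕ} (S C : Set (Fin n → ℂ)) (hC : PolyConstructible C) (hSC : S ⊆ C)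
    (P : Ideal (MvPolynomial (Fin n) ℂ)) (hPm : P ∈ (vanishingIdeal ℂ S).minimalPrimes) :
    ∃ q ∉ P, ∀ x, (∀ p ∈ P, eval x p = 0) → eval x q ≠ 0 → x ∈ C := by
  obtain ⟨k, E, Q, rfl⟩ := hC
  have hP : P.IsPrime := hPm.1.1
  by_cases hgood : ∃ i, (∀ p ∈ E i, p ∈ P) ∧ Q i ∉ P
  · obtain ⟨i, h1, h2⟩ := hgood
    exact ⟨Q i, h2, fun x hx hxq => Set.mem_iUnion.2 ⟨i, fun p hp => hx p (h1 p hp), hxq⟩⟩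
  exfalso
  push Not at hgood
  -- an element in all other minimal primes
  have hfin := Ideal.finite_minimalPrimes_of_isNoetherianRing _ (vanishingIdeal ℂ S)
  obtain ⟨e, he, heP⟩ : ∃ e ∈ (hfin.toFinset.erase P).inf id, e ∉ P := by
    rw [← SetLike.not_le_iff_exists, hP.inf_le']
    rintro ⟨P', hP', hle⟩
    rw [Finset.mem_erase, hfin.mem_toFinset] at hP'
    exact hP'.1 (le_antisymm hle (hPm.2 hP'.2.1 hle))
  have heI : ∀ f ∈ P, ∀ s ∈ S, eval s (e * f) = 0 := by
    intro f hf s hs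
    have hs' : vanishingIdeal ℂ S ≤ vanishingIdeal ℂ {s} :=
      vanishingIdeal_anti_mono (by simpa using hs)
    obtain ⟨P', hP', hle⟩ := Ideal.exists_minimalPrimes_le hs'
    have : e * f ∈ P' := by
      by_cases hPP : P' = P
      · rw [hPP]; exact P.mul_mem_left _ hf
      · refine P'.mul_mem_right _ ?_
        have hle : (hfin.toFinset.erase P).inf id ≤ P' :=
          Finset.inf_le (f := id) (Finset.mem_erase.2 ⟨hPP, hfin.mem_toFinset.2 hP'⟩)
        exact hle he
    exact (mem_vanishingIdeal_singleton_iff s _).1 (hle this)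
  have hr : ∀ i, ∃ r ∉ P, ∀ s ∈ S, (∀ p ∈ E i, eval s p = 0) → eval s (Q i) ≠ 0 →
      eval s (e * r) = 0 := by
    intro i
    by_cases hi : ∀ p ∈ E i, p ∈ P
    · refine ⟨1, P.ne_top_iff_one.1 hP.ne_top, fun s hs _ h2 => ?_⟩
      have := heI _ (hgood i hi) s hs
      rw [map_mul] at this
      simpa using (mul_eq_zero.1 this).resolve_right h2
    · push Not at hi
      obtain ⟨p, hp, hpP⟩ := hi
      exact ⟨p, hpP, fun s _ h1 _ => by rw [map_mul, h1 p hp, mul_zero]⟩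
  choose r hrP hr using hr
  have hmem : e * ∏ i, r i ∈ vanishingIdeal ℂ S := by
    intro s hs
    obtain ⟨i, h1, h2⟩ := Set.mem_iUnion.1 (hSC hs)
    have h3 := hr i s hs h1 h2
    obtain ⟨c, hc⟩ := Finset.dvd_prod_of_mem r (Finset.mem_univ i)
    change eval s _ = 0
    rw [hc, ← mul_assoc, map_mul, h3, zero_mul]
  rcases hP.mem_or_mem (hPm.1.2 hmem) with h | h
  · exact heP h
  · obtain ⟨i, -, hi⟩ := Ideal.IsPrime.prod_mem_iff.1 h
    exact hrP i hi

/-- Let `n ≥ 1` and let `(Cⱼ)` be a countable family of constructible subsets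
of `ℂⁿ`. Then the closure of `⋂ⱼ Cⱼ` in the standard (Euclidean, i.e. product) topology on `ℂⁿ`
is an algebraic set: it is the common zero locus of finitely many polynomials. -/
theorem closure_iInter_constructible_is_algebraic
    (n : ℕ) (hn : 1 ≤ n) (C : ℕ → Set (Fin n → ℂ))
    (hcon : ∀ j, PolyConstructible (C j)) :
    ∃ (s : ℕ) (q : Fin s → MvPolynomial (Fin n) ℂ),
      closure (⋂ j : ℕ, C j) = {x : Fin n → ℂ | ∀ i : Fin s, MvPolynomial.eval x (q i) = 0} := by
  obtain ⟨s, q, hq⟩ := Submodule.fg_iff_exists_fin_generating_family.1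
    (IsNoetherian.noetherian (MvPolynomial.vanishingIdeal ℂ (⋂ j : ℕ, C j)))
  have hq' : Ideal.span (Set.range q) = MvPolynomial.vanishingIdeal ℂ (⋂ j : ℕ, C j) := hq
  refine ⟨s, q, Set.Subset.antisymm ?_ ?_⟩
  · apply closure_minimal
    · intro x hx i
      have : q i ∈ MvPolynomial.vanishingIdeal ℂ (⋂ j : ℕ, C j) := by
        rw [← hq']
        exact Ideal.subset_span ⟨i, rfl⟩
      exact this x hx
    · have : {x : Fin n → ℂ | ∀ i : Fin s, MvPolynomial.eval x (q i) = 0} =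
          ⋂ i, {x | MvPolynomial.eval x (q i) = 0} := by ext; simp
      rw [this]
      exact isClosed_iInter fun i => isClosed_eq (MvPolynomial.continuous_eval _) continuous_const
  · intro x hx
    have hle : MvPolynomial.vanishingIdeal ℂ (⋂ j : ℕ, C j) ≤
        MvPolynomial.vanishingIdeal ℂ {x} := by
      rw [← hq', Ideal.span_le]
      rintro _ ⟨i, rfl⟩
      exact (MvPolynomial.mem_vanishingIdeal_singleton_iff x _).2 (hx i)
    obtain ⟨P, hP, hPx⟩ := Ideal.exists_minimalPrimes_le hle
    have : P.IsPrime := hP.1.1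
    choose r hrP hr using fun j =>
      generic_open _ (C j) (hcon j) (Set.iInter_subset C j) P hP
    refine closure_mono ?_ (baire_part P r hrP x
      fun p hp => (MvPolynomial.mem_vanishingIdeal_singleton_iff x _).1 (hPx hp))
    rintro x' ⟨h1, h2⟩
    exact Set.mem_iInter.2 fun j => hr j x' h1 (h2 j)
end

section
/- Let W be a nonempty Noetherian topological space, let X be an irreducible topological space, and let g : W → X be a continuous open map. Then every irreducible component C of W has dense image in X, i.e. the closure of g(C) equals X. -/
/-- Let `W` be a nonempty Noetherian topological space, `X` an irreducible
topological space, and `g : W → X` a continuous open map. Then every irreducible component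
`C` of `W` has dense image in `X`. -/
theorem component_dense_image
    (W X : Type*) [TopologicalSpace W] [TopologicalSpace X]
    [TopologicalSpace.NoetherianSpace W] [Nonempty W] [IrreducibleSpace X]
    (g : W → X) (hg : Continuous g) (hopen : IsOpenMap g)
    (C : Set W) (hC : C ∈ irreducibleComponents W) :
    closure (g '' C) = Set.univ := by
  obtain ⟨U, hU, hne, hUC⟩ :=
    TopologicalSpace.NoetherianSpace.exists_isOpen_nonempty_subset_irreducibleComponent C hC
  have hd : Dense (g '' U) := (hopen U hU).dense (hne.image g)
  exact (hd.mono (Set.image_mono hUC)).closure_eq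
end
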